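/- arXiv:0803.0413 — 6 statements merged into one kernel-verified Lean document; each statement's English description precedes it below -/
import Mathlib

section
/- The two expressions for d_3 agree: (3√3/(4π))·L(χ_{-3},2) = (2√3/π³) · ∑'_{(m,k)} 1/(m² + 3k²)². -/
/-!
Write `N(a, b) = a² + ab + b²` for the norm form of the Eisenstein integers `Λ = ℤ[ζ]`, `ζ² = ζ - 1`.

The number `r(n)` of vectors of norm `n ≠ 0` is `6 ∑_{d ∣ n} χ(d)` (`card_eisSphere`). Both sides
take the value `6` at `1` and satisfy, for every prime `p`,
`f(pm) = (1 + χ(p)) f(m) - χ(p) f(m / p)`, the last term being absent if `p ∤ m`. For `r` this is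
`card_rec`. If `p ≡ 2 mod 3`, then `p ∣ N(v)` forces `p ∣ v`. If `p = 3`, every vector of norm
divisible by `3` is a multiple of `1 + ζ`. If `p ≡ 1 mod 3`, then `p = w w̄` by Thue's pigeonhole
argument, a vector of norm divisible by `p` is a multiple of `w` or of `w̄`, and it is a multiple of
both exactly when it is divisible by `p`, so inclusion-exclusion applies. No unique factorization is
needed.

Grouping by norm, `∑_{v ≠ 0} N(v)⁻² = 6 ζ(2) L(χ, 2) = π² L(χ, 2)` (`hasSum_eisTerm`). The form
`m² + 3k²` is `N` on the sublattice of vectors with even second coordinate, which by symmetry among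
the three sublattices of index `2` carries `(1 + 2/16) / 3 = 3/8` of this sum (`tsum_even`).
-/

open scoped Real

/-- The odd Dirichlet character modulo 3. -/
noncomputable def chiNeg3 (n : ℕ) : ℝ :=
  if n % 3 = 1 then 1 else if n % 3 = 2 then -1 else 0

/-! ### The norm form -/

/-- The norm form `a² + ab + b²` of the Eisenstein integer `a + bζ`, where `ζ² = ζ - 1`. -/
def eisNorm (v : ℤ × ℤ) : ℤ := v.1 ^ 2 + v.1 * v.2 + v.2 ^ 2

/-- Multiplication by the Eisenstein integer `w.1 + w.2 ζ`, in coordinates. -/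
def eisMul (w v : ℤ × ℤ) : ℤ × ℤ :=
  (w.1 * v.1 - w.2 * v.2, w.1 * v.2 + w.2 * v.1 + w.2 * v.2)

/-- Complex conjugation on Eisenstein integers: `ζ` goes to `1 - ζ`. -/
def eisConj (w : ℤ × ℤ) : ℤ × ℤ := (w.1 + w.2, -w.2)

lemma eisNorm_mul (w v : ℤ × ℤ) : eisNorm (eisMul w v) = eisNorm w * eisNorm v := by
  simp only [eisNorm, eisMul]; ring

lemma eisNorm_conj (w : ℤ × ℤ) : eisNorm (eisConj w) = eisNorm w := by
  simp only [eisNorm, eisConj]; ring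

lemma eisMul_conj_mul (w v : ℤ × ℤ) :
    eisMul (eisConj w) (eisMul w v) = (eisNorm w * v.1, eisNorm w * v.2) := by
  simp only [eisNorm, eisConj, eisMul, Prod.mk.injEq]; constructor <;> ring

lemma eisMul_mul_conj (w v : ℤ × ℤ) :
    eisMul w (eisMul (eisConj w) v) = (eisNorm w * v.1, eisNorm w * v.2) := by
  simp only [eisNorm, eisConj, eisMul, Prod.mk.injEq]; constructor <;> ring

lemma eisMul_injective {w : ℤ × ℤ} (hw : eisNorm w ≠ 0) : Function.Injective (eisMul w) := by
  intro u v h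
  have h' := congrArg (eisMul (eisConj w)) h
  rw [eisMul_conj_mul, eisMul_conj_mul, Prod.mk.injEq] at h'
  exact Prod.ext (mul_left_cancel₀ hw h'.1) (mul_left_cancel₀ hw h'.2)

lemma eisNorm_nonneg (v : ℤ × ℤ) : 0 ≤ eisNorm v := by
  simp only [eisNorm]; nlinarith [sq_nonneg (v.1 + v.2), sq_nonneg v.1, sq_nonneg v.2]

lemma eisNorm_eq_zero {v : ℤ × ℤ} : eisNorm v = 0 ↔ v = 0 := by
  constructor
  · intro h
    simp only [eisNorm] at h
    have h1 : v.1 ^ 2 = 0 := by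
      nlinarith [sq_nonneg (v.1 + v.2), sq_nonneg v.1, sq_nonneg v.2]
    have h2 : v.2 ^ 2 = 0 := by
      nlinarith [sq_nonneg (v.1 + v.2), sq_nonneg v.1, sq_nonneg v.2]
    exact Prod.ext (pow_eq_zero_iff (by norm_num) |>.1 h1) (pow_eq_zero_iff (by norm_num) |>.1 h2)
  · rintro rfl; simp [eisNorm]

/-- The finite set of Eisenstein integers of norm `n`. The box is large enough since
`a² ≤ 2 (a² + ab + b²)`; see `mem_eisSphere`. -/
noncomputable def eisSphere (n : ℕ) : Finset (ℤ × ℤ) :=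
  (Finset.Icc (-(2 * n : ℤ)) (2 * n) ×ˢ Finset.Icc (-(2 * n : ℤ)) (2 * n)).filter
    fun v => eisNorm v = n

lemma mem_eisSphere {n : ℕ} {v : ℤ × ℤ} : v ∈ eisSphere n ↔ eisNorm v = n := by
  simp only [eisSphere, Finset.mem_filter, Finset.mem_product, Finset.mem_Icc,
    and_iff_right_iff_imp]
  intro h
  simp only [eisNorm] at h
  have key : ∀ x : ℤ, x ^ 2 ≤ 2 * n → -(2 * n : ℤ) ≤ x ∧ x ≤ 2 * n := by
    intro x hx
    constructor <;> nlinarith [Int.le_self_sq x, Int.le_self_sq (-x)]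
  exact ⟨key _ (by nlinarith [sq_nonneg (v.1 + v.2), sq_nonneg v.2]),
    key _ (by nlinarith [sq_nonneg (v.1 + v.2), sq_nonneg v.1])⟩

lemma card_eisSphere_one : (eisSphere 1).card = 6 := by decide

/-! ### Primes and the norm form -/

/-- For a prime `p ≠ 3`, a nontrivial zero `(a, b)` of the norm form modulo `p` gives an element
`a / b` of order `3` in `(ℤ/p)ˣ`, so that `3 ∣ p - 1`. -/
lemma inert_dvd {p : ℕ} (hp : p.Prime) (h2 : p % 3 = 2) {v : ℤ × ℤ} (h : (p : ℤ) ∣ eisNorm v) :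
    (p : ℤ) ∣ v.1 ∧ (p : ℤ) ∣ v.2 := by
  have := Fact.mk hp
  rw [← ZMod.intCast_zmod_eq_zero_iff_dvd] at h
  rw [← ZMod.intCast_zmod_eq_zero_iff_dvd, ← ZMod.intCast_zmod_eq_zero_iff_dvd]
  simp only [eisNorm] at h
  push_cast at h
  generalize (v.1 : ZMod p) = a at *
  generalize (v.2 : ZMod p) = b at *
  by_cases hb : b = 0
  · subst hb; simpa using h
  exfalso
  have h3 : (3 : ZMod p) ≠ 0 := by
    intro h3
    have : (p : ℕ) ∣ 3 := by
      rw [← ZMod.natCast_eq_zero_iff]; exact_mod_cast h3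
    have := (Nat.prime_dvd_prime_iff_eq hp Nat.prime_three).1 this
    omega
  have ht : (a / b) ^ 2 + a / b + 1 = 0 := by
    field_simp; linear_combination h
  generalize a / b = t at ht
  have ht3 : t ^ 3 = 1 := by linear_combination (t - 1) * ht
  have ht1 : t ≠ 1 := by
    rintro rfl; apply h3; linear_combination ht
  have ho : orderOf t = 3 := orderOf_eq_prime ht3 ht1
  have ht0 : t ≠ 0 := by rintro rfl; simp at ht
  have := ZMod.orderOf_dvd_card_sub_one ht0
  rw [ho] at this
  have := hp.two_le
  omega

/-- Thue's argument: for a primitive cube root of unity `t` modulo `p`, two of the points of a square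
of side `⌊√p⌋` agree under `x - t y mod p`, and their difference has norm `p` or `2p`;
the latter is impossible modulo `4`. -/
lemma exists_eisNorm_eq {p : ℕ} (hp : p.Prime) (h1 : p % 3 = 1) : ∃ w, eisNorm w = p := by
  have := Fact.mk hp
  obtain ⟨t, ht⟩ : ∃ t : ZMod p, t ^ 2 + t + 1 = 0 := by
    have hd : 3 ∣ Fintype.card (ZMod p)ˣ := by
      rw [ZMod.card_units]; omega
    obtain ⟨u, hu⟩ := exists_prime_orderOf_dvd_card 3 hd
    refine ⟨u, ?_⟩
    have hu3 : (u : ZMod p) ^ 3 = 1 := by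
      rw [← Units.val_pow_eq_pow_val, ← hu, pow_orderOf_eq_one, Units.val_one]
    have hu1 : (u : ZMod p) - 1 ≠ 0 := by
      intro h
      have : u = 1 := Units.ext (by simpa using sub_eq_zero.1 h)
      simp [this] at hu
    apply mul_left_cancel₀ hu1
    linear_combination hu3
  set k := Nat.sqrt p with hk
  let B := Finset.range (k + 1) ×ˢ Finset.range (k + 1)
  have hcard : (Finset.univ : Finset (ZMod p)).card < B.card := by
    simp only [Finset.card_univ, ZMod.card, B, Finset.card_product, Finset.card_range]
    exact Nat.lt_succ_sqrt p
  obtain ⟨x, hx, y, hy, hxy, hf⟩ := Finset.exists_ne_map_eq_of_card_lt_of_maps_to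
    (f := fun v : ℕ × ℕ => (v.1 : ZMod p) - t * v.2) hcard (fun _ _ => by simp)
  have hkp : (k : ℤ) ^ 2 < p := by
    have h1 : k * k ≤ p := Nat.sqrt_le p
    have h2 : k * k ≠ p := by
      intro h
      exact (Nat.Prime.prime hp).irreducible.not_isSquare ⟨k, h.symm⟩
    have : k * k < p := lt_of_le_of_ne h1 h2
    rw [sq]; exact_mod_cast this
  simp only [B, Finset.mem_product, Finset.mem_range] at hx hy
  set c : ℤ := x.1 - y.1 with hc
  set d : ℤ := x.2 - y.2 with hd
  have hcd : (p : ℤ) ∣ eisNorm (c, d) := by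
    rw [← ZMod.intCast_zmod_eq_zero_iff_dvd]
    simp only [eisNorm, hc, hd]
    push_cast
    have e : (x.1 : ZMod p) - y.1 = t * (x.2 - y.2) := by linear_combination hf
    rw [e]
    linear_combination ((x.2 : ZMod p) - y.2) ^ 2 * ht
  have hne : eisNorm (c, d) ≠ 0 := by
    rw [Ne, eisNorm_eq_zero, Prod.mk_eq_zero]
    rintro ⟨hc0, hd0⟩
    exact hxy (Prod.ext (by omega) (by omega))
  have hpos := lt_of_le_of_ne (eisNorm_nonneg (c, d)) hne.symm
  have hcl : c ^ 2 ≤ (k : ℤ) ^ 2 := sq_le_sq.2 (by rw [Nat.abs_cast, abs_le]; omega)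
  have hdl : d ^ 2 ≤ (k : ℤ) ^ 2 := sq_le_sq.2 (by rw [Nat.abs_cast, abs_le]; omega)
  have hlt : eisNorm (c, d) < 3 * p := by
    simp only [eisNorm]; nlinarith [sq_nonneg (c - d)]
  obtain ⟨m, hm⟩ := hcd
  have hp0 : (0 : ℤ) < p := by exact_mod_cast hp.pos
  have hm0 : 0 < m := by
    by_contra h; nlinarith
  have hm3 : m < 3 := by
    by_contra h; nlinarith
  have hm12 : m = 1 ∨ m = 2 := by omega
  rcases hm12 with rfl | rfl
  · exact ⟨(c, d), by simpa using hm⟩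
  · exfalso
    have hodd : (p : ℤ) % 2 = 1 := by
      rcases hp.eq_two_or_odd with h | h
      · omega
      · omega
    simp only [eisNorm] at hm
    rcases Int.even_or_odd' c with ⟨i, hi | hi⟩ <;> rcases Int.even_or_odd' d with ⟨j, hj | hj⟩ <;>
      rw [hi, hj] at hm <;> ring_nf at hm <;> omega

/-! ### Counting Eisenstein integers of given norm -/

/-- Scaling by `p` identifies the vectors of norm `m / p` with the vectors of norm `p m`
whose coordinates are both divisible by `p`. -/
lemma card_scaled {p m : ℕ} (hp : p.Prime) :
    ((eisSphere (p * m)).filter fun v => (p : ℤ) ∣ v.1 ∧ (p : ℤ) ∣ v.2).card =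
      if p ∣ m then (eisSphere (m / p)).card else 0 := by
  have hp0 : (p : ℤ) ≠ 0 := by exact_mod_cast hp.ne_zero
  split_ifs with h
  · obtain ⟨k, rfl⟩ := h
    rw [Nat.mul_div_cancel_left _ hp.pos]
    symm
    apply Finset.card_bij (fun v _ => ((p : ℤ) * v.1, (p : ℤ) * v.2))
    · intro v hv
      rw [mem_eisSphere] at hv
      rw [Finset.mem_filter, mem_eisSphere]
      refine ⟨?_, ⟨_, rfl⟩, ⟨_, rfl⟩⟩
      simp only [eisNorm] at hv ⊢
      push_cast
      linear_combination (p : ℤ) ^ 2 * hv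
    · intro u _ v _ h
      rw [Prod.mk.injEq] at h
      exact Prod.ext (mul_left_cancel₀ hp0 h.1) (mul_left_cancel₀ hp0 h.2)
    · rintro ⟨a, b⟩ hv
      rw [Finset.mem_filter, mem_eisSphere] at hv
      obtain ⟨h, ⟨x, hx⟩, ⟨y, hy⟩⟩ := hv
      simp only at hx hy
      subst hx hy
      refine ⟨(x, y), ?_, rfl⟩
      rw [mem_eisSphere]
      apply mul_left_cancel₀ (pow_ne_zero 2 hp0)
      simp only [eisNorm] at h ⊢
      push_cast at h
      linear_combination h
  · rw [Finset.card_eq_zero, Finset.filter_eq_empty_iff]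
    rintro ⟨a, b⟩ hv ⟨⟨x, hx⟩, ⟨y, hy⟩⟩
    rw [mem_eisSphere] at hv
    simp only at hx hy
    subst hx hy
    apply h
    have : (p : ℤ) ∣ m := by
      refine ⟨eisNorm (x, y), ?_⟩
      apply mul_left_cancel₀ hp0
      simp only [eisNorm] at hv ⊢
      push_cast at hv
      linear_combination -hv
    exact_mod_cast this

open Classical in
/-- If `w` has norm `p`, multiplication by `w` identifies the vectors of norm `m` with the
multiples of `w` of norm `p m`. -/
lemma card_image_eisMul {p : ℕ} (hp : p ≠ 0) {w : ℤ × ℤ} (hw : eisNorm w = p) (m : ℕ) :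
    ((eisSphere (p * m)).filter fun v => ∃ u, eisMul w u = v).card = (eisSphere m).card := by
  have hp0 : (p : ℤ) ≠ 0 := by exact_mod_cast hp
  have hw0 : eisNorm w ≠ 0 := by rw [hw]; exact hp0
  rw [← Finset.card_image_of_injective (eisSphere m) (eisMul_injective hw0)]
  congr 1
  ext v
  simp only [Finset.mem_filter, Finset.mem_image, mem_eisSphere]
  constructor
  · rintro ⟨h, u, rfl⟩
    refine ⟨u, ?_, rfl⟩
    rw [eisNorm_mul, hw] at h
    push_cast at h
    exact mul_left_cancel₀ hp0 h
  · rintro ⟨u, hu, rfl⟩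
    refine ⟨?_, u, rfl⟩
    rw [eisNorm_mul, hw, hu]; push_cast; rfl

/-- Modulo `3` the norm form is `(a - b)²`, so every vector of norm divisible by `3` is a multiple
of the vector `1 + ζ` of norm `3`. -/
lemma card_ramified (m : ℕ) : (eisSphere (3 * m)).card = (eisSphere m).card := by
  classical
  rw [← card_image_eisMul (p := 3) (by norm_num) (w := (1, 1)) (by simp [eisNorm]) m,
    Finset.filter_true_of_mem]
  rintro ⟨a, b⟩ hv
  rw [mem_eisSphere] at hv
  simp only [eisNorm] at hv
  have h3 : (3 : ℤ) ∣ a - b := by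
    apply Int.prime_three.dvd_of_dvd_pow (n := 2)
    refine ⟨m - a * b, ?_⟩
    push_cast at hv
    linear_combination hv
  obtain ⟨k, hk⟩ := h3
  refine ⟨(b + 2 * k, - k), ?_⟩
  simp only [eisMul, Prod.mk.injEq]
  constructor <;> linarith

/-- In the split case `p = w w̄`, a vector of norm divisible by `p` is a multiple of `w` or of
`w̄`, and it is a multiple of both exactly when it is divisible by `p`. -/
lemma card_split {p : ℕ} (hp : p.Prime) (h1 : p % 3 = 1) (m : ℕ) :
    (eisSphere (p * m)).card + (if p ∣ m then (eisSphere (m / p)).card else 0) =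
      2 * (eisSphere m).card := by
  obtain ⟨w, hw⟩ := exists_eisNorm_eq hp h1
  have hpZ : Prime (p : ℤ) := Nat.prime_iff_prime_int.1 hp
  have hp0 : (p : ℤ) ≠ 0 := hpZ.ne_zero
  have hw' : eisNorm (eisConj w) = p := by rw [eisNorm_conj, hw]
  have hcc : eisConj (eisConj w) = w := by simp [eisConj]
  -- a vector of norm divisible by `p` is a multiple of `w` as soon as the second coordinate of
  -- its product with `w̄` vanishes modulo `p`
  have key : ∀ w : ℤ × ℤ, eisNorm w = p → ∀ v, (p : ℤ) ∣ eisNorm v →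
      (p : ℤ) ∣ (eisMul (eisConj w) v).2 → ∃ u, eisMul w u = v := by
    intro w hw v hv h2
    have hn : (p : ℤ) ∣ eisNorm (eisMul (eisConj w) v) := by
      rw [eisNorm_mul]; exact hv.mul_left _
    have h1 : (p : ℤ) ∣ (eisMul (eisConj w) v).1 := by
      apply hpZ.dvd_of_dvd_pow (n := 2)
      have : (eisMul (eisConj w) v).1 ^ 2 = eisNorm (eisMul (eisConj w) v) -
          (eisMul (eisConj w) v).2 * ((eisMul (eisConj w) v).1 + (eisMul (eisConj w) v).2) := by
        simp only [eisNorm]; ring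
      rw [this]
      exact dvd_sub hn (h2.mul_right _)
    obtain ⟨x, hx⟩ := h1
    obtain ⟨y, hy⟩ := h2
    refine ⟨(x, y), ?_⟩
    have h := eisMul_mul_conj w v
    rw [hw] at h
    have e : eisMul w (eisMul (eisConj w) v) =
        ((p : ℤ) * (eisMul w (x, y)).1, (p : ℤ) * (eisMul w (x, y)).2) := by
      simp only [eisMul] at hx hy ⊢
      rw [hx, hy, Prod.mk.injEq]; constructor <;> ring
    rw [e, Prod.mk.injEq] at h
    exact Prod.ext (mul_left_cancel₀ hp0 h.1) (mul_left_cancel₀ hp0 h.2)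
  have hunion : ∀ v ∈ eisSphere (p * m),
      (∃ u, eisMul w u = v) ∨ (∃ u, eisMul (eisConj w) u = v) := by
    intro v hv
    rw [mem_eisSphere] at hv
    have hv' : (p : ℤ) ∣ eisNorm v := ⟨m, by rw [hv]; push_cast; rfl⟩
    have hprod : (p : ℤ) ∣ (eisMul (eisConj w) v).2 * (eisMul w v).2 := by
      have : (eisMul (eisConj w) v).2 * (eisMul w v).2 =
          eisNorm w * v.2 ^ 2 - eisNorm v * w.2 ^ 2 := by
        simp only [eisNorm, eisMul, eisConj]; ring
      rw [this, hw]
      exact dvd_sub (dvd_mul_right _ _) (hv'.mul_right _)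
    rcases hpZ.dvd_or_dvd hprod with h | h
    · exact Or.inl (key w hw v hv' h)
    · exact Or.inr (key _ hw' v hv' (by rwa [hcc]))
  have hinter : ∀ v ∈ eisSphere (p * m),
      ((∃ u, eisMul w u = v) ∧ (∃ u, eisMul (eisConj w) u = v)) ↔
        ((p : ℤ) ∣ v.1 ∧ (p : ℤ) ∣ v.2) := by
    intro v _
    constructor
    · rintro ⟨⟨u, hu⟩, ⟨u', hu'⟩⟩
      have e1 := eisMul_conj_mul w u
      have e2 := eisMul_mul_conj w u'
      rw [hu, hw, eisMul, eisConj, Prod.mk.injEq] at e1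
      rw [hu', hw, eisMul, Prod.mk.injEq] at e2
      have hd : ¬ (p : ℤ) ∣ 3 * w.2 := by
        intro h
        rcases hpZ.dvd_or_dvd h with h | h
        · have : p ∣ 3 := by exact_mod_cast h
          have := (Nat.prime_dvd_prime_iff_eq hp Nat.prime_three).1 this
          omega
        · have hc : (p : ℤ) ∣ w.1 := by
            apply hpZ.dvd_of_dvd_pow (n := 2)
            have : w.1 ^ 2 = eisNorm w - w.2 * (w.1 + w.2) := by simp only [eisNorm]; ring
            rw [this, hw]
            exact dvd_sub (dvd_refl _) (h.mul_right _)
          obtain ⟨x, hx⟩ := hc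
          obtain ⟨y, hy⟩ := h
          simp only [eisNorm] at hw
          rw [hx, hy] at hw
          apply hpZ.not_isUnit
          apply IsUnit.of_mul_eq_one (x ^ 2 + x * y + y ^ 2)
          apply mul_left_cancel₀ hp0
          linear_combination hw
      constructor
      · refine (hpZ.dvd_or_dvd (a := 3 * w.2) ?_).resolve_left hd
        refine ⟨2 * u'.2 - 2 * u.2 - u.1 + u'.1, ?_⟩
        linear_combination 2 * (e2.2 - e1.2) - (e1.1 - e2.1)
      · refine (hpZ.dvd_or_dvd (a := 3 * w.2) ?_).resolve_left hd
        refine ⟨2 * u.1 - 2 * u'.1 - u'.2 + u.2, ?_⟩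
        linear_combination 2 * (e1.1 - e2.1) - (e2.2 - e1.2)
    · rintro ⟨⟨x, hx⟩, ⟨y, hy⟩⟩
      refine ⟨⟨eisMul (eisConj w) (x, y), ?_⟩, ⟨eisMul w (x, y), ?_⟩⟩
      · rw [eisMul_mul_conj, hw]; exact Prod.ext hx.symm hy.symm
      · rw [eisMul_conj_mul, hw]; exact Prod.ext hx.symm hy.symm
  classical
  rw [← card_scaled hp, ← Finset.filter_congr hinter, Finset.filter_and, two_mul]
  nth_rw 2 [← card_image_eisMul hp.ne_zero hw m]
  rw [← card_image_eisMul hp.ne_zero hw' m]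
  rw [add_comm (Finset.card _) (Finset.card (Finset.filter _ _)),
    ← Finset.card_union_add_card_inter (Finset.filter _ _) (Finset.filter _ _),
    ← Finset.filter_or, Finset.filter_true_of_mem hunion]

/-- The character `chiNeg3` with integer values. -/
def chiInt (n : ℕ) : ℤ := if n % 3 = 1 then 1 else if n % 3 = 2 then -1 else 0

lemma chiNeg3_eq (n : ℕ) : chiNeg3 n = chiInt n := by
  simp only [chiNeg3, chiInt]; split_ifs <;> simp

lemma chiInt_mul (a b : ℕ) : chiInt (a * b) = chiInt a * chiInt b := by
  have ha : a % 3 = 0 ∨ a % 3 = 1 ∨ a % 3 = 2 := by omega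
  have hb : b % 3 = 0 ∨ b % 3 = 1 ∨ b % 3 = 2 := by omega
  simp only [chiInt, Nat.mul_mod a b]
  rcases ha with h | h | h <;> rcases hb with h' | h' | h' <;> simp [h, h']

/-- The coefficients `∑_{d ∣ n} χ(d)` of `ζ(s) L(χ, s)`. -/
def chiSum (n : ℕ) : ℤ := ∑ d ∈ n.divisors, chiInt d

/-- Euler's recursion for the number of Eisenstein integers of given norm, uniformly in the
three types of primes. -/
lemma card_rec {p : ℕ} (hp : p.Prime) (m : ℕ) :
    ((eisSphere (p * m)).card : ℤ) = (1 + chiInt p) * (eisSphere m).card -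
      chiInt p * (if p ∣ m then ((eisSphere (m / p)).card : ℤ) else 0) := by
  have h3 : p % 3 = 0 ∨ p % 3 = 1 ∨ p % 3 = 2 := by omega
  rcases h3 with h | h | h
  · obtain rfl : 3 = p := (Nat.prime_dvd_prime_iff_eq Nat.prime_three hp).1 (by omega)
    simp [chiInt, card_ramified]
  · have := card_split hp h m
    simp only [chiInt, h]
    by_cases hm : p ∣ m
    · simp only [hm, if_true] at this ⊢
      zify at this
      linarith
    · simp only [hm, if_false, if_true] at this ⊢
      zify at this
      linarith
  · have := card_scaled (m := m) hp
    rw [Finset.filter_true_of_mem] at this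
    · rw [this]
      by_cases hm : p ∣ m <;> simp [chiInt, h, hm]
    · intro v hv
      rw [mem_eisSphere] at hv
      exact inert_dvd hp h ⟨m, by rw [hv]; push_cast; rfl⟩

/-- The divisors of `p m` divisible by `p` are the `p d` with `d ∣ m`. -/
lemma sum_divisors_filter_dvd {p m : ℕ} (hp : p.Prime) :
    ∑ d ∈ (p * m).divisors with p ∣ d, chiInt d = chiInt p * chiSum m := by
  rw [chiSum, Finset.mul_sum]
  symm
  apply Finset.sum_bij (fun d _ => p * d)
  · intro d hd
    rw [Nat.mem_divisors] at hd
    rw [Finset.mem_filter, Nat.mem_divisors]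
    exact ⟨⟨mul_dvd_mul_left p hd.1, mul_ne_zero hp.ne_zero hd.2⟩, dvd_mul_right _ _⟩
  · intro a _ b _ h
    exact Nat.eq_of_mul_eq_mul_left hp.pos h
  · intro d hd
    rw [Finset.mem_filter, Nat.mem_divisors] at hd
    obtain ⟨⟨h1, h2⟩, ⟨e, rfl⟩⟩ := hd
    exact ⟨e, Nat.mem_divisors.2 ⟨Nat.dvd_of_mul_dvd_mul_left hp.pos h1,
      right_ne_zero_of_mul h2⟩, rfl⟩
  · intro d _
    rw [chiInt_mul]

lemma chiSum_rec {p : ℕ} (hp : p.Prime) (m : ℕ) :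
    chiSum (p * m) = (1 + chiInt p) * chiSum m -
      chiInt p * (if p ∣ m then chiSum (m / p) else 0) := by
  have e1 : chiSum (p * m) = chiInt p * chiSum m +
      ∑ d ∈ m.divisors with ¬ p ∣ d, chiInt d := by
    rw [← sum_divisors_filter_dvd hp, chiSum,
      ← Finset.sum_filter_add_sum_filter_not _ (fun d => p ∣ d)]
    congr 1
    apply Finset.sum_congr _ (fun _ _ => rfl)
    ext d
    simp only [Finset.mem_filter, Nat.mem_divisors]
    constructor
    · rintro ⟨⟨h1, h2⟩, h3⟩
      exact ⟨⟨(((Nat.Prime.coprime_iff_not_dvd hp).2 h3).symm).dvd_of_dvd_mul_left h1,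
        right_ne_zero_of_mul h2⟩, h3⟩
    · rintro ⟨⟨h1, h2⟩, h3⟩
      exact ⟨⟨h1.mul_left _, mul_ne_zero hp.ne_zero h2⟩, h3⟩
  have e2 : chiSum m = chiInt p * (if p ∣ m then chiSum (m / p) else 0) +
      ∑ d ∈ m.divisors with ¬ p ∣ d, chiInt d := by
    conv_lhs => rw [chiSum, ← Finset.sum_filter_add_sum_filter_not _ (fun d => p ∣ d)]
    congr 1
    split_ifs with h
    · obtain ⟨k, rfl⟩ := h
      rw [Nat.mul_div_cancel_left _ hp.pos, sum_divisors_filter_dvd hp]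
    · rw [mul_zero, Finset.filter_false_of_mem, Finset.sum_empty]
      intro d hd hpd
      exact h (hpd.trans (Nat.dvd_of_mem_divisors hd))
  linarith

/-- There are `6 ∑_{d ∣ n} χ(d)` Eisenstein integers of norm `n ≠ 0`: both sides satisfy the
same recursion over the primes dividing `n`. -/
lemma card_eisSphere {n : ℕ} (hn : n ≠ 0) : ((eisSphere n).card : ℤ) = 6 * chiSum n := by
  induction n using Nat.strong_induction_on with
  | _ n ih =>
    by_cases h1 : n = 1
    · subst h1
      rw [card_eisSphere_one]; simp [chiSum, chiInt]
    obtain ⟨p, hp, m, rfl⟩ := Nat.exists_prime_and_dvd h1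
    have hm : m ≠ 0 := right_ne_zero_of_mul hn
    have hlt : m < p * m := by nlinarith [hp.two_le, Nat.pos_of_ne_zero hm]
    rw [card_rec hp, chiSum_rec hp, ih m hlt hm]
    split_ifs with h
    · rw [ih (m / p) ((Nat.div_le_self _ _).trans_lt hlt)
        (Nat.div_pos (Nat.le_of_dvd (Nat.pos_of_ne_zero hm) h) hp.pos).ne']
      ring
    · ring

/-! ### Summation -/

lemma summable_chi : Summable fun n : ℕ => chiNeg3 n / (n : ℝ) ^ 2 := by
  apply Summable.of_norm_bounded hasSum_zeta_two.summable
  intro n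
  rw [norm_div, norm_pow, Real.norm_natCast]
  gcongr
  simp only [chiNeg3]
  split_ifs <;> simp

/-- The Dirichlet series of `chiSum` at `2` is `L(χ, 2) ζ(2)`. -/
lemma hasSum_chiSum : HasSum (fun n : ℕ => (chiSum n : ℝ) / (n : ℝ) ^ 2)
    ((∑' n : ℕ, chiNeg3 n / (n : ℝ) ^ 2) * (π ^ 2 / 6)) := by
  have hs := summable_mul_of_summable_norm summable_chi.norm hasSum_zeta_two.summable.norm
  have h := (summable_chi.hasSum.mul hasSum_zeta_two hs).tsum_fiberwise
    (fun p : ℕ × ℕ => p.1 * p.2)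
  refine (congrArg (HasSum · _) (funext fun n => ?_)).mpr h
  rcases eq_or_ne n 0 with rfl | hn
  · -- at `n = 0` the fibre is infinite, but every term on it has a factor `1 / 0 = 0`
    have h0 : ∀ b : (fun p : ℕ × ℕ => p.1 * p.2) ⁻¹' {0},
        chiNeg3 b.1.1 / (b.1.1 : ℝ) ^ 2 * (1 / (b.1.2 : ℝ) ^ 2) = 0 := by
      rintro ⟨⟨a, b⟩, hab⟩
      have : a = 0 ∨ b = 0 := by simpa using hab
      rcases this with rfl | rfl <;> simp
    rw [tsum_congr h0]; simp
  · rw [show (fun p : ℕ × ℕ => p.1 * p.2) ⁻¹' {n} = n.divisorsAntidiagonal by ext; simp [hn],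
      Finset.tsum_subtype' n.divisorsAntidiagonal
        fun p => chiNeg3 p.1 / (p.1 : ℝ) ^ 2 * (1 / (p.2 : ℝ) ^ 2), chiSum,
      ← Nat.sum_divisorsAntidiagonal (fun d _ => chiInt d), Int.cast_sum, Finset.sum_div]
    apply Finset.sum_congr rfl
    intro p hp
    rw [chiNeg3_eq, ← (Nat.mem_divisorsAntidiagonal.1 hp).1]
    push_cast
    rw [mul_pow, div_mul_div_comm, mul_one]

/-- The summand `N(v)⁻²`; its value at `v = 0` is `0`. -/
noncomputable def eisTerm (v : ℤ × ℤ) : ℝ := 1 / (eisNorm v : ℝ) ^ 2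

/-- Grouping the Eisenstein integers by norm gives `∑ N(v)⁻² = 6 ζ(2) L(χ, 2)`. -/
lemma hasSum_eisTerm :
    HasSum eisTerm (π ^ 2 * ∑' n : ℕ, chiNeg3 n / (n : ℝ) ^ 2) := by
  let N : ℤ × ℤ → ℕ := fun v => (eisNorm v).toNat
  have hN : ∀ v n, N v = n ↔ v ∈ eisSphere n := by
    intro v n
    rw [mem_eisSphere]
    have := eisNorm_nonneg v
    simp only [N]
    omega
  have hfib : ∀ n : ℕ, HasSum (fun v : {v // N v = n} => eisTerm v)
      (6 * ((chiSum n : ℝ) / (n : ℝ) ^ 2)) := by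
    intro n
    have hset : {v | N v = n} = ↑(eisSphere n) := by ext v; exact hN v n
    have h := (eisSphere n).hasSum eisTerm
    have hval : ∑ v ∈ eisSphere n, eisTerm v = 6 * ((chiSum n : ℝ) / (n : ℝ) ^ 2) := by
      rcases eq_or_ne n 0 with rfl | hn
      · rw [Finset.sum_eq_zero]
        · simp
        · intro v hv
          rw [mem_eisSphere] at hv
          simp [eisTerm, hv]
      · have h1 : ∀ v ∈ eisSphere n, eisTerm v = 1 / (n : ℝ) ^ 2 := by
          intro v hv
          rw [mem_eisSphere] at hv
          simp [eisTerm, hv]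
        rw [Finset.sum_congr rfl h1, Finset.sum_const, nsmul_eq_mul]
        have h2 : ((eisSphere n).card : ℝ) = 6 * chiSum n := by
          exact_mod_cast card_eisSphere hn
        rw [h2]; ring
    rw [hval] at h
    have h' : HasSum (fun v : ({v | N v = n} : Set (ℤ × ℤ)) => eisTerm v)
        (6 * ((chiSum n : ℝ) / (n : ℝ) ^ 2)) := by
      rw [hset]; exact h
    exact h'
  have hsum := hasSum_chiSum.mul_left 6
  have hsig : HasSum (fun x : Σ n : ℕ, {v // N v = n} => eisTerm x.2)
      (6 * ((∑' n : ℕ, chiNeg3 n / (n : ℝ) ^ 2) * (π ^ 2 / 6))) := by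
    have hS : Summable (fun x : Σ n : ℕ, {v // N v = n} => eisTerm x.2) := by
      rw [summable_sigma_of_nonneg (fun x => by unfold eisTerm; positivity)]
      refine ⟨fun n => (hfib n).summable, ?_⟩
      exact hsum.summable.congr fun n => (hfib n).tsum_eq.symm
    rw [hsum.unique (hS.hasSum.sigma hfib)]
    exact hS.hasSum
  have := (Equiv.sigmaFiberEquiv N).hasSum_iff (f := eisTerm) |>.1 hsig
  convert this using 1
  ring

/-- The sublattice `ℤ[√-3]` carries `3/8` of the sum over all Eisenstein integers. It is one of the
three sublattices of index `2`; reflections of `Λ` permute these, any vector outside `2Λ` is in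
exactly one of them, and `2Λ`, contained in all three, carries `1/16` of the whole sum. -/
lemma tsum_even : ∑' v : ℤ × ℤ, (if Even v.2 then eisTerm v else 0) =
    3 / 8 * ∑' v, eisTerm v := by
  have hS : Summable eisTerm := hasSum_eisTerm.summable
  have hind : ∀ (P : ℤ × ℤ → Prop) [DecidablePred P],
      Summable fun v => if P v then eisTerm v else 0 := by
    intro P _
    refine (hS.indicator {v | P v}).congr fun v => ?_
    simp [Set.indicator_apply]
  let swap : (ℤ × ℤ) ≃ (ℤ × ℤ) := Equiv.prodComm ℤ ℤ
  let refl : (ℤ × ℤ) ≃ (ℤ × ℤ) :=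
    { toFun := fun v => (v.1 + v.2, -v.2)
      invFun := fun v => (v.1 + v.2, -v.2)
      left_inv := fun v => by simp
      right_inv := fun v => by simp }
  have e1 : ∑' v : ℤ × ℤ, (if Even v.1 then eisTerm v else 0) =
      ∑' v : ℤ × ℤ, (if Even v.2 then eisTerm v else 0) := by
    rw [← swap.tsum_eq]
    apply tsum_congr
    intro v
    have : eisTerm (swap v) = eisTerm v := by
      simp only [eisTerm, eisNorm, swap, Equiv.prodComm_apply, Prod.fst_swap, Prod.snd_swap]
      congr 3; ring
    rw [this]; rfl
  have e2 : ∑' v : ℤ × ℤ, (if Even (v.1 + v.2) then eisTerm v else 0) =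
      ∑' v : ℤ × ℤ, (if Even v.1 then eisTerm v else 0) := by
    rw [← refl.tsum_eq fun v : ℤ × ℤ => if Even v.1 then eisTerm v else 0]
    apply tsum_congr
    intro v
    have : eisTerm (refl v) = eisTerm v := by
      simp only [eisTerm, eisNorm, refl, Equiv.coe_fn_mk]
      congr 3; ring
    rw [this]; rfl
  have e3 : ∑' v : ℤ × ℤ, (if Even v.1 ∧ Even v.2 then eisTerm v else 0) =
      1 / 16 * ∑' v, eisTerm v := by
    let dbl : ℤ × ℤ → ℤ × ℤ := fun v => (2 * v.1, 2 * v.2)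
    have hinj : Function.Injective dbl := by
      intro u v h
      simp only [dbl, Prod.mk.injEq] at h
      exact Prod.ext (by omega) (by omega)
    rw [← hinj.tsum_eq, ← tsum_mul_left]
    · apply tsum_congr
      intro v
      have : eisNorm (dbl v) = 4 * eisNorm v := by simp only [eisNorm, dbl]; ring
      simp only [eisTerm, this, dbl, even_two_mul, and_self, if_true]
      push_cast
      rw [mul_pow, one_div_mul_one_div]
      norm_num
    · intro v hv
      have hv' : Even v.1 ∧ Even v.2 := by
        by_contra h
        simp [h] at hv
      obtain ⟨⟨x, hx⟩, ⟨y, hy⟩⟩ := hv'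
      exact ⟨(x, y), Prod.ext (by simp only [dbl]; omega) (by simp only [dbl]; omega)⟩
  have key : ∑' v : ℤ × ℤ, (if Even v.2 then eisTerm v else 0) +
      ∑' v : ℤ × ℤ, (if Even v.1 then eisTerm v else 0) +
      ∑' v : ℤ × ℤ, (if Even (v.1 + v.2) then eisTerm v else 0) =
      ∑' v, eisTerm v +
        2 * ∑' v : ℤ × ℤ, (if Even v.1 ∧ Even v.2 then eisTerm v else 0) := by
    rw [← (hind _).tsum_add (hind _), ← ((hind _).add (hind _)).tsum_add (hind _),
      ← tsum_mul_left, ← hS.tsum_add ((hind _).mul_left 2)]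
    apply tsum_congr
    intro v
    by_cases h1 : Even v.1 <;> by_cases h2 : Even v.2 <;> simp [h1, h2, Int.even_add]; ring
  rw [e2, e1, e3] at key
  linarith

/-- `m + k√-3` has Eisenstein coordinates `(m - k, 2k)`. -/
lemma tsum_sqrt_neg_three : ∑' p : {q : ℤ × ℤ // q ≠ 0},
    1 / ((p.1.1 : ℝ) ^ 2 + 3 * (p.1.2 : ℝ) ^ 2) ^ 2 =
      ∑' v : ℤ × ℤ, (if Even v.2 then eisTerm v else 0) := by
  let φ : ℤ × ℤ → ℤ × ℤ := fun v => (v.1 - v.2, 2 * v.2)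
  have hinj : Function.Injective φ := by
    intro u v h
    simp only [φ, Prod.mk.injEq] at h
    exact Prod.ext (by omega) (by omega)
  rw [← hinj.tsum_eq]
  · rw [show (∑' p : {q : ℤ × ℤ // q ≠ 0}, 1 / ((p.1.1 : ℝ) ^ 2 + 3 * (p.1.2 : ℝ) ^ 2) ^ 2) =
        ∑' q : ℤ × ℤ, 1 / ((q.1 : ℝ) ^ 2 + 3 * (q.2 : ℝ) ^ 2) ^ 2 from
      tsum_subtype_eq_of_support_subset (s := {q : ℤ × ℤ | q ≠ 0})
        (f := fun q : ℤ × ℤ => 1 / ((q.1 : ℝ) ^ 2 + 3 * (q.2 : ℝ) ^ 2) ^ 2) (by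
          -- the summand at the origin is `1 / 0 = 0`
          rintro q hq rfl
          simp at hq)]
    apply tsum_congr
    intro v
    simp only [eisTerm, eisNorm, φ, even_two_mul, if_true]
    push_cast
    congr 2; ring
  · intro v hv
    have hv' : Even v.2 := by
      by_contra h
      simp [h] at hv
    obtain ⟨y, hy⟩ := hv'
    exact ⟨(v.1 + y, y), Prod.ext (by simp only [φ]; omega) (by simp only [φ]; omega)⟩

theorem dThree_two_expressions :
    (3 * Real.sqrt 3 / (4 * π)) * (∑' n : ℕ, chiNeg3 n / (n : ℝ) ^ 2) =
      (2 * Real.sqrt 3 / π ^ 3) *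
        ∑' p : {q : ℤ × ℤ // q ≠ 0},
          1 / ((p.1.1 : ℝ) ^ 2 + 3 * (p.1.2 : ℝ) ^ 2) ^ 2 := by
  rw [tsum_sqrt_neg_three, tsum_even, hasSum_eisTerm.tsum_eq]
  have := Real.pi_ne_zero
  field_simp
  ring
end

section
/- For every real s > 1, ∑'_{(k,m)} ( −1/(9m² + 2k²)^s + 1/(k² + 18m²)^s ) = 2 ∑_{n≥1} χ_{-3}(n) · r_n / n^s, where r_n = (1/2)·#{(k,m) ∈ ℤ² : k² + 2m² = n}. -/
/-- `r_n = (1/2) · #{(k,m) ∈ ℤ² : k² + 2m² = n}`. -/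
noncomputable def rCount (n : ℕ) : ℝ :=
  (1 / 2 : ℝ) * (Nat.card {q : ℤ × ℤ // q.1 ^ 2 + 2 * q.2 ^ 2 = (n : ℤ)})

/-- The form `a² + 2b²` with values in `ℕ`. -/
def quadForm (p : ℤ × ℤ) : ℕ := (p.1 ^ 2 + 2 * p.2 ^ 2).toNat

lemma quadForm_cast (p : ℤ × ℤ) : (quadForm p : ℤ) = p.1 ^ 2 + 2 * p.2 ^ 2 :=
  Int.toNat_of_nonneg (by positivity)

lemma quadForm_cast_real (p : ℤ × ℤ) : (quadForm p : ℝ) = (p.1 : ℝ) ^ 2 + 2 * (p.2 : ℝ) ^ 2 := by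
  exact_mod_cast congrArg (Int.cast : ℤ → ℝ) (quadForm_cast p)

/-- The term `Q(a,b)^(-s)`. For `s ≠ 0` its value at the origin is `1 / 0 = 0`. -/
noncomputable def formTerm (s : ℝ) (p : ℤ × ℤ) : ℝ := 1 / (quadForm p : ℝ) ^ s

lemma formTerm_zero {s : ℝ} (hs : 1 < s) : formTerm s 0 = 0 := by
  have : s ≠ 0 := by linarith
  simp [formTerm, quadForm, Real.zero_rpow this]

/-- Comparison with the sup norm on `ℤ²`: `max(|a|,|b|)² ≤ a² + 2b²`. -/
lemma summable_formTerm {s : ℝ} (hs : 1 < s) : Summable (formTerm s) := by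
  have h := EisensteinSeries.summable_one_div_norm_rpow (k := 2 * s) (by linarith)
  rw [← (finTwoArrowEquiv ℤ).symm.summable_iff] at h
  refine Summable.of_nonneg_of_le (fun p => by unfold formTerm; positivity) (fun p => ?_) h
  by_cases hp : p = 0
  · subst hp
    rw [formTerm_zero hs]
    simp only [Function.comp_apply]
    positivity
  obtain ⟨a, b⟩ := p
  simp only [Function.comp_apply]
  set x : Fin 2 → ℤ := (finTwoArrowEquiv ℤ).symm (a, b) with hx
  have hx0 : 0 < ‖x‖ := by
    rw [norm_pos_iff]
    intro h0
    apply hp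
    apply (finTwoArrowEquiv ℤ).symm.injective
    rw [← hx, h0]
    ext i; fin_cases i <;> rfl
  have hle : ‖x‖ ^ 2 ≤ (quadForm (a, b) : ℝ) := by
    rw [quadForm_cast_real]
    have h1 : ‖x‖ ≤ √((a : ℝ) ^ 2 + 2 * (b : ℝ) ^ 2) := by
      rw [pi_norm_le_iff_of_nonneg (Real.sqrt_nonneg _)]
      intro i
      apply Real.le_sqrt_of_sq_le
      fin_cases i
      · simp [hx, Int.norm_eq_abs]; positivity
      · simp [hx, Int.norm_eq_abs]; nlinarith [sq_nonneg (a : ℝ), sq_nonneg (b : ℝ)]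
    calc ‖x‖ ^ 2 ≤ √((a : ℝ) ^ 2 + 2 * (b : ℝ) ^ 2) ^ 2 := by gcongr
      _ = _ := Real.sq_sqrt (by positivity)
  rw [formTerm, Real.rpow_neg hx0.le, ← one_div, Real.rpow_mul hx0.le]
  apply one_div_le_one_div_of_le (by positivity)
  apply Real.rpow_le_rpow (by positivity) _ (by linarith)
  exact_mod_cast hle

lemma chiNeg3_quadForm (p : ℤ × ℤ) : chiNeg3 (quadForm p) =
    (if (3 : ℤ) ∣ p.2 then 1 else 0) - (if (3 : ℤ) ∣ p.1 then 1 else 0) := by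
  obtain ⟨a, b⟩ := p
  have hQ := quadForm_cast (a, b)
  simp only at hQ
  have hm : (quadForm (a, b) : ℤ) % 3 = ((a % 3) ^ 2 + 2 * (b % 3) ^ 2) % 3 := by
    rw [hQ]; simp [Int.add_emod, Int.mul_emod, pow_two]
  have ha : a % 3 = 0 ∨ a % 3 = 1 ∨ a % 3 = 2 := by omega
  have hb : b % 3 = 0 ∨ b % 3 = 1 ∨ b % 3 = 2 := by omega
  simp only [Int.dvd_iff_emod_eq_zero, chiNeg3]
  rcases ha with ha | ha | ha <;> rcases hb with hb | hb | hb <;>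
    rw [ha, hb] at hm <;> norm_num at hm <;> simp only [ha, hb]
  all_goals first
    | (have h : quadForm (a, b) % 3 = 0 := by omega
       norm_num [h])
    | (have h : quadForm (a, b) % 3 = 1 := by omega
       norm_num [h])
    | (have h : quadForm (a, b) % 3 = 2 := by omega
       norm_num [h])

/-- Summation over the fibres of `quadForm`. -/
lemma tsum_chi_formTerm {s : ℝ} (h : Summable fun p => chiNeg3 (quadForm p) * formTerm s p) :
    ∑' p, chiNeg3 (quadForm p) * formTerm s p =
      2 * ∑' n : ℕ, chiNeg3 n * rCount n / (n : ℝ) ^ s := by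
  rw [← (Equiv.sigmaFiberEquiv quadForm).summable_iff] at h
  rw [← (Equiv.sigmaFiberEquiv quadForm).tsum_eq, ← tsum_mul_left]
  refine (h.tsum_sigma).trans (tsum_congr fun n => ?_)
  have hc : ∀ c : {p // quadForm p = n},
      chiNeg3 (quadForm (Equiv.sigmaFiberEquiv quadForm ⟨n, c⟩)) *
        formTerm s (Equiv.sigmaFiberEquiv quadForm ⟨n, c⟩) = chiNeg3 n * (1 / (n : ℝ) ^ s) := by
    rintro ⟨p, rfl⟩
    rfl
  have hcard : Nat.card {p // quadForm p = n} =
      Nat.card {q : ℤ × ℤ // q.1 ^ 2 + 2 * q.2 ^ 2 = (n : ℤ)} :=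
    Nat.card_congr (Equiv.subtypeEquivRight fun p => by
      rw [← quadForm_cast, Nat.cast_inj])
  simp only [Function.comp_apply]
  rw [tsum_congr hc, tsum_const, hcard, rCount, nsmul_eq_mul]
  ring

theorem sum_diff_eq_twice_twisted_series (s : ℝ) (hs : 1 < s) :
    (∑' p : {q : ℤ × ℤ // q ≠ 0},
        (-(1 / ((9 * (p.1.2 : ℝ) ^ 2 + 2 * (p.1.1 : ℝ) ^ 2) ^ s))
          + 1 / (((p.1.1 : ℝ) ^ 2 + 18 * (p.1.2 : ℝ) ^ 2) ^ s))) =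
      2 * ∑' n : ℕ, chiNeg3 n * rCount n / (n : ℝ) ^ s := by
  have hg := summable_formTerm hs
  let i : ℤ × ℤ → ℤ × ℤ := fun p => (3 * p.2, p.1)
  let j : ℤ × ℤ → ℤ × ℤ := fun p => (p.1, 3 * p.2)
  have hi : Function.Injective i := by
    rintro ⟨a, b⟩ ⟨c, d⟩ h
    simp only [i, Prod.mk.injEq] at h ⊢
    omega
  have hj : Function.Injective j := by
    rintro ⟨a, b⟩ ⟨c, d⟩ h
    simp only [j, Prod.mk.injEq] at h ⊢
    omega
  let A : ℤ × ℤ → ℝ := {p | (3 : ℤ) ∣ p.1}.indicator (formTerm s)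
  let B : ℤ × ℤ → ℝ := {p | (3 : ℤ) ∣ p.2}.indicator (formTerm s)
  have hA : Summable A := hg.indicator _
  have hB : Summable B := hg.indicator _
  have hAi : ∑' p, formTerm s (i p) = ∑' p, A p := by
    rw [← hi.tsum_eq (f := A)]
    · refine tsum_congr fun p => ?_
      simp [A, i]
    · intro p hp
      have hmem : p ∈ {p : ℤ × ℤ | (3 : ℤ) ∣ p.1} := Set.mem_of_indicator_ne_zero hp
      obtain ⟨c, hc⟩ := hmem
      exact ⟨(p.2, c), by simp [i, ← hc]⟩
  have hBj : ∑' p, formTerm s (j p) = ∑' p, B p := by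
    rw [← hj.tsum_eq (f := B)]
    · refine tsum_congr fun p => ?_
      simp [B, j]
    · intro p hp
      have hmem : p ∈ {p : ℤ × ℤ | (3 : ℤ) ∣ p.2} := Set.mem_of_indicator_ne_zero hp
      obtain ⟨c, hc⟩ := hmem
      exact ⟨(p.1, c), by simp [j, ← hc]⟩
  have hchi : ∀ p, B p - A p = chiNeg3 (quadForm p) * formTerm s p := by
    intro p
    rw [chiNeg3_quadForm]
    simp only [A, B, Set.indicator_apply, Set.mem_ofPred_eq]
    split_ifs <;> ring
  have hij : ∑' p, (formTerm s (j p) - formTerm s (i p)) =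
      ∑' p, formTerm s (j p) - ∑' p, formTerm s (i p) :=
    (hg.comp_injective hj).tsum_sub (hg.comp_injective hi)
  rw [← tsum_chi_formTerm ((hB.sub hA).congr hchi), ← tsum_congr hchi, hB.tsum_sub hA, ← hBj,
    ← hAi, ← hij]
  -- The origin contributes `0` to each sum, so restricting to nonzero pairs changes nothing.
  rw [← (Subtype.val_injective (p := fun q : ℤ × ℤ => q ≠ 0)).tsum_eq]
  · refine tsum_congr fun p => ?_
    simp only [formTerm, quadForm_cast_real, i, j]
    push_cast
    ring_nf
  · intro p hp
    rw [Subtype.range_coe_subtype]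
    rintro rfl
    apply hp
    have h0 : i 0 = 0 ∧ j 0 = 0 := by simp [i, j]
    simp [h0.1, h0.2]
end

section
/- For every real s > 1, ∑'_{(k,m)} ( −1/(9m² + 2k²)^s + 1/(k² + 18m²)^s ) = 2·L(χ_{-3}, s)·L(χ_{24}, s). -/
/-- The real Dirichlet character modulo 24 attached to `ℚ(√6)`. -/
noncomputable def chi24 (n : ℕ) : ℝ :=
  if n % 24 = 1 ∨ n % 24 = 5 ∨ n % 24 = 19 ∨ n % 24 = 23 then 1
  else if n % 24 = 7 ∨ n % 24 = 11 ∨ n % 24 = 13 ∨ n % 24 = 17 then -1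
  else 0

/-! ### Representations by `x² + 2y²` -/

/-- The set of representations of `n` by the form `x² + 2y²`, i.e. of elements of norm `n` in
`ℤ[√-2]`, with `x + y√-2` encoded as `(x, y)`. -/
def reps (n : ℤ) : Set (ℤ × ℤ) := {q | q.1 ^ 2 + 2 * q.2 ^ 2 = n}

lemma reps_finite (n : ℤ) : (reps n).Finite := by
  apply (Set.finite_Icc ((-|n|, -|n|) : ℤ × ℤ) (|n|, |n|)).subset
  rintro ⟨x, y⟩ h
  have h : x ^ 2 + 2 * y ^ 2 = n := h
  have hn : x ^ 2 + 2 * y ^ 2 ≤ |n| := h ▸ le_abs_self _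
  have hx : |x| ≤ |n| := by
    have := Int.natAbs_le_self_sq x
    rw [Int.natCast_natAbs] at this
    nlinarith [sq_nonneg y]
  have hy : |y| ≤ |n| := by
    have := Int.natAbs_le_self_sq y
    rw [Int.natCast_natAbs] at this
    nlinarith [sq_nonneg x, sq_nonneg y]
  rw [abs_le] at hx hy
  exact ⟨⟨hx.1, hy.1⟩, ⟨hx.2, hy.2⟩⟩

lemma ncard_reps_one : (reps 1).ncard = 2 := by
  have : reps 1 = {((1, 0) : ℤ × ℤ), (-1, 0)} := by
    ext ⟨x, y⟩
    simp only [reps, Set.mem_ofPred_eq, Set.mem_insert_iff, Set.mem_singleton_iff, Prod.mk.injEq]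
    constructor
    · intro h
      have hy : y = 0 := by
        by_contra hy
        have : 0 < y ^ 2 := by positivity
        nlinarith [sq_nonneg x]
      subst hy
      have : x ^ 2 = 1 := by linarith
      rcases (sq_eq_sq_iff_eq_or_eq_neg (b := (1 : ℤ))).mp (by simpa using this) with h | h <;>
        simp [h]
    · rintro (⟨rfl, rfl⟩ | ⟨rfl, rfl⟩) <;> norm_num
  rw [this, Set.ncard_pair (by simp)]

/-- The prime 2 ramifies: multiplication by `√-2` is a bijection from norm `m` to norm `2m`. -/
lemma ncard_reps_two_mul (m : ℤ) : (reps (2 * m)).ncard = (reps m).ncard := by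
  have : reps (2 * m) = (fun q : ℤ × ℤ => (2 * q.2, q.1)) '' reps m := by
    ext ⟨x, y⟩
    simp only [reps, Set.mem_ofPred_eq, Set.mem_image, Prod.mk.injEq, Prod.exists]
    constructor
    · intro h
      have hx : (2 : ℤ) ∣ x := Int.prime_two.dvd_of_dvd_pow (n := 2) ⟨m - y ^ 2, by linarith⟩
      obtain ⟨z, rfl⟩ := hx
      exact ⟨y, z, by linarith, rfl, rfl⟩
    · rintro ⟨u, v, h, rfl, rfl⟩
      linarith
  rw [this, Set.ncard_image_of_injective]
  rintro ⟨u, v⟩ ⟨u', v'⟩ h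
  simp only [Prod.mk.injEq] at h ⊢
  omega

lemma ncard_smul_reps {p : ℤ} (hp : p ≠ 0) (S : Set (ℤ × ℤ)) :
    ((fun q : ℤ × ℤ => (p * q.1, p * q.2)) '' S).ncard = S.ncard := by
  apply Set.ncard_image_of_injective
  rintro ⟨u, v⟩ ⟨u', v'⟩ h
  simpa [hp] using h

/-- If `-2` is not a square mod `p`, every element of norm divisible by `p` is a multiple of `p`.
The set on the right is that of the elements of norm `m / p`, empty unless `p ∣ m`. -/
lemma ncard_reps_inert {p : ℕ} (hp : p.Prime) (h2 : p ≠ 2) (h8 : ¬ (p % 8 = 1 ∨ p % 8 = 3))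
    (m : ℤ) : (reps (p * m)).ncard = {q : ℤ × ℤ | p * (q.1 ^ 2 + 2 * q.2 ^ 2) = m}.ncard := by
  have := Fact.mk hp
  have hp0 : (p : ℤ) ≠ 0 := by exact_mod_cast hp.ne_zero
  rw [← ncard_smul_reps hp0 {q : ℤ × ℤ | p * (q.1 ^ 2 + 2 * q.2 ^ 2) = m}]
  congr 1
  ext ⟨x, y⟩
  simp only [reps, Set.mem_ofPred_eq, Set.mem_image, Prod.mk.injEq, Prod.exists]
  constructor
  · intro h
    have hz : (x : ZMod p) ^ 2 + 2 * (y : ZMod p) ^ 2 = 0 := by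
      have := congrArg (Int.cast : ℤ → ZMod p) h
      push_cast at this
      rw [this]; simp
    have hy : (y : ZMod p) = 0 := by
      by_contra hy
      apply h8
      rw [← ZMod.exists_sq_eq_neg_two_iff h2]
      refine ⟨x / y, ?_⟩
      field_simp
      linear_combination -hz
    have hx : (x : ZMod p) = 0 := by simpa [hy] using hz
    rw [ZMod.intCast_zmod_eq_zero_iff_dvd] at hx hy
    obtain ⟨u, rfl⟩ := hx
    obtain ⟨v, rfl⟩ := hy
    refine ⟨u, v, ?_, rfl, rfl⟩
    apply mul_left_cancel₀ hp0
    rw [← h]; ring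
  · rintro ⟨u, v, h, rfl, rfl⟩
    rw [← h]; ring

/-- Thue's argument: if `z² = -2` mod `p`, two distinct pairs in `[0, √p]²` have the same value of
`u - z v` mod `p`, and their difference `(x, y)` satisfies `p ∣ x² + 2y² < 3p`. -/
lemma exists_sq_add_two_mul_sq {p : ℕ} (hp : p.Prime) (h8 : p % 8 = 1 ∨ p % 8 = 3) :
    ∃ a b : ℤ, a ^ 2 + 2 * b ^ 2 = p := by
  have := Fact.mk hp
  have h2 : p ≠ 2 := by rintro rfl; omega
  obtain ⟨z, hz⟩ := (ZMod.exists_sq_eq_neg_two_iff h2).mpr h8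
  set r := Nat.sqrt p with hr
  have hcard : (Finset.univ : Finset (ZMod p)).card <
      (Finset.range (r + 1) ×ˢ Finset.range (r + 1)).card := by
    rw [Finset.card_univ, ZMod.card, Finset.card_product, Finset.card_range]
    exact Nat.lt_succ_sqrt p
  obtain ⟨⟨u, v⟩, huv, ⟨u', v'⟩, huv', hne, heq⟩ :=
    Finset.exists_ne_map_eq_of_card_lt_of_maps_to hcard
      (f := fun q : ℕ × ℕ => (q.1 : ZMod p) - z * q.2) (fun _ _ => Finset.mem_univ _)
  simp only [Finset.mem_product, Finset.mem_range] at huv huv'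
  have hrr : (r : ℤ) ^ 2 < p := by
    have h1 : r * r ≤ p := Nat.sqrt_le p
    have h3 : r * r ≠ p := fun h => hp.not_isSquare ⟨r, h.symm⟩
    have : r * r < p := lt_of_le_of_ne h1 h3
    rw [sq]; exact_mod_cast this
  obtain ⟨x, hx⟩ : ∃ x : ℤ, x = (u : ℤ) - u' := ⟨_, rfl⟩
  obtain ⟨y, hy⟩ : ∃ y : ℤ, y = (v : ℤ) - v' := ⟨_, rfl⟩
  have hx2 : x ^ 2 ≤ r ^ 2 := sq_le_sq' (by omega) (by omega)
  have hy2 : y ^ 2 ≤ r ^ 2 := sq_le_sq' (by omega) (by omega)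
  have hxy : (x : ZMod p) = z * y := by
    rw [hx, hy]; push_cast
    linear_combination heq
  have hdvd : (p : ℤ) ∣ x ^ 2 + 2 * y ^ 2 := by
    rw [← ZMod.intCast_zmod_eq_zero_iff_dvd]
    push_cast
    rw [hxy]
    linear_combination -(y : ZMod p) ^ 2 * hz
  have hpos : 0 < x ^ 2 + 2 * y ^ 2 := by
    by_cases h0 : x = 0
    · have : y ≠ 0 := by
        intro h1
        apply hne
        rw [Prod.mk.injEq]
        omega
      positivity
    · positivity
  obtain ⟨k, hk⟩ := hdvd
  have hp0 : (0 : ℤ) < p := by exact_mod_cast hp.pos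
  have hk1 : 0 < k := by
    by_contra h; push Not at h; nlinarith
  have hk3 : k < 3 := by
    by_contra h; push Not at h; nlinarith
  have : k = 1 ∨ k = 2 := by omega
  rcases this with rfl | rfl
  · exact ⟨x, y, by linarith⟩
  -- If `x² + 2y² = 2p`, divide by `√-2`.
  · have hx : (2 : ℤ) ∣ x := Int.prime_two.dvd_of_dvd_pow (n := 2) ⟨p - y ^ 2, by linarith⟩
    obtain ⟨w, rfl⟩ := hx
    exact ⟨y, w, by linarith⟩

/-- Multiplication by `π = a + b√-2`, where `π` has norm `p`, is a bijection from the elements of norm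
`m` to those elements of norm `pm` that are divisible by `π`; divisibility of `x + y√-2` by `π` is
expressed by `p ∣ a y - b x`, the second coordinate of its product with the conjugate of `π`. -/
lemma ncard_reps_dvd {p : ℕ} (hp : p.Prime) {a b : ℤ} (hab : a ^ 2 + 2 * b ^ 2 = p)
    (hb : ¬ (p : ℤ) ∣ b) (m : ℤ) :
    {q ∈ reps (p * m) | (p : ℤ) ∣ a * q.2 - b * q.1}.ncard = (reps m).ncard := by
  have hp0 : (p : ℤ) ≠ 0 := by exact_mod_cast hp.ne_zero
  have hpp : Prime (p : ℤ) := Nat.prime_iff_prime_int.mp hp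
  have : {q ∈ reps (p * m) | (p : ℤ) ∣ a * q.2 - b * q.1} =
      (fun q : ℤ × ℤ => (a * q.1 - 2 * b * q.2, a * q.2 + b * q.1)) '' reps m := by
    ext ⟨x, y⟩
    simp only [reps, Set.mem_ofPred_eq, Set.mem_image, Prod.mk.injEq, Prod.exists]
    constructor
    · rintro ⟨h, v, hv⟩
      obtain ⟨u, hu⟩ : (p : ℤ) ∣ a * x + 2 * b * y := by
        refine (hpp.dvd_or_dvd (a := b) ?_).resolve_left hb
        exact ⟨y - a * v, by linear_combination y * hab - a * hv⟩
      -- `u + v√-2` is the quotient of `x + y√-2` by `a + b√-2`.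
      refine ⟨u, v, ?_, ?_, ?_⟩
      · apply mul_left_cancel₀ (pow_ne_zero 2 hp0)
        linear_combination (x ^ 2 + 2 * y ^ 2) * hab + p * h
          - (a * x + 2 * b * y + p * u) * hu - 2 * (a * y - b * x + p * v) * hv
      · apply mul_left_cancel₀ hp0
        linear_combination x * hab - a * hu + 2 * b * hv
      · apply mul_left_cancel₀ hp0
        linear_combination y * hab - a * hv - b * hu
    · rintro ⟨u, v, h, rfl, rfl⟩
      exact ⟨by linear_combination (u ^ 2 + 2 * v ^ 2) * hab + p * h,
        v, by linear_combination v * hab⟩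
  rw [this, Set.ncard_image_of_injective]
  rintro ⟨u, v⟩ ⟨u', v'⟩ h
  simp only [Prod.mk.injEq] at h ⊢
  constructor <;> apply mul_left_cancel₀ hp0
  · linear_combination (u' - u) * hab + a * h.1 + 2 * b * h.2
  · linear_combination (v' - v) * hab + a * h.2 - b * h.1

/-- Inclusion–exclusion over divisibility by the two prime factors of a split prime `p`: elements of
norm `pm` divisible by both are `p` times an element of norm `m / p`. -/
lemma ncard_reps_split {p : ℕ} (hp : p.Prime) (h8 : p % 8 = 1 ∨ p % 8 = 3) (m : ℤ) :
    (reps (p * m)).ncard + {q : ℤ × ℤ | p * (q.1 ^ 2 + 2 * q.2 ^ 2) = m}.ncard =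
      2 * (reps m).ncard := by
  have hp0 : (p : ℤ) ≠ 0 := by exact_mod_cast hp.ne_zero
  have hp1 : (1 : ℤ) < p := by exact_mod_cast hp.one_lt
  have hpp : Prime (p : ℤ) := Nat.prime_iff_prime_int.mp hp
  have hp2 : ¬ (p : ℤ) ∣ 2 := by
    intro h
    have h' := Int.le_of_dvd (by norm_num) h
    omega
  obtain ⟨a, b, hab⟩ := exists_sq_add_two_mul_sq hp h8
  have hsq : ¬ IsSquare p := hp.prime.not_isSquare
  have hb : ¬ (p : ℤ) ∣ b := by
    rintro ⟨c, rfl⟩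
    rcases eq_or_ne c 0 with rfl | hc
    · apply hsq
      refine ⟨a.natAbs, ?_⟩
      zify
      rw [← sq, sq_abs, ← hab]; ring
    · have hc2 : 0 < c ^ 2 := by positivity
      have : 1 ≤ c ^ 2 := hc2
      nlinarith [sq_nonneg a, mul_le_mul_of_nonneg_left this (sq_nonneg (p : ℤ))]
  have ha : ¬ (p : ℤ) ∣ a := by
    intro h
    have h' : (p : ℤ) ∣ 2 * b ^ 2 := by
      rw [show 2 * b ^ 2 = p - a ^ 2 by linarith]
      exact dvd_sub dvd_rfl (dvd_pow h two_ne_zero)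
    exact hb (hpp.dvd_of_dvd_pow ((hpp.dvd_or_dvd h').resolve_left hp2))
  have hA := ncard_reps_dvd hp hab hb m
  have hB := ncard_reps_dvd (b := -b) hp (by simpa using hab) (by simpa using hb) m
  have hU : reps (p * m) = {q ∈ reps (p * m) | (p : ℤ) ∣ a * q.2 - b * q.1} ∪
      {q ∈ reps (p * m) | (p : ℤ) ∣ a * q.2 - (-b) * q.1} := by
    ext ⟨x, y⟩
    simp only [reps, Set.mem_ofPred_eq, Set.mem_union, ← and_or_left]
    refine ⟨fun h => ⟨h, ?_⟩, fun h => h.1⟩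
    -- The product of the two linear forms is `y² (a² + 2b²) - b² (x² + 2y²)`.
    apply hpp.dvd_or_dvd
    exact ⟨y ^ 2 - b ^ 2 * m, by linear_combination y ^ 2 * hab - b ^ 2 * h⟩
  have hI : {q ∈ reps (p * m) | (p : ℤ) ∣ a * q.2 - b * q.1} ∩
      {q ∈ reps (p * m) | (p : ℤ) ∣ a * q.2 - (-b) * q.1} =
      (fun q : ℤ × ℤ => ((p : ℤ) * q.1, (p : ℤ) * q.2)) ''
        {q : ℤ × ℤ | p * (q.1 ^ 2 + 2 * q.2 ^ 2) = m} := by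
    ext ⟨x, y⟩
    simp only [reps, Set.mem_ofPred_eq, Set.mem_inter_iff, Set.mem_image, Prod.mk.injEq,
      Prod.exists]
    constructor
    · rintro ⟨⟨h, h1⟩, _, h2⟩
      have hy : (p : ℤ) ∣ y := by
        have h3 : (p : ℤ) ∣ 2 * (a * y) := by
          have := dvd_add h1 h2
          rwa [show a * y - b * x + (a * y - -b * x) = 2 * (a * y) by ring] at this
        exact (hpp.dvd_or_dvd ((hpp.dvd_or_dvd h3).resolve_left hp2)).resolve_left ha
      have hx : (p : ℤ) ∣ x := by
        have h3 : (p : ℤ) ∣ b * x := by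
          have := dvd_sub (hy.mul_left a) h1
          rwa [show a * y - (a * y - b * x) = b * x by ring] at this
        exact (hpp.dvd_or_dvd h3).resolve_left hb
      obtain ⟨u, rfl⟩ := hx
      obtain ⟨v, rfl⟩ := hy
      refine ⟨u, v, ?_, rfl, rfl⟩
      apply mul_left_cancel₀ hp0
      rw [← h]; ring
    · rintro ⟨u, v, h, rfl, rfl⟩
      have h' : ((p : ℤ) * u) ^ 2 + 2 * (p * v) ^ 2 = p * m := by rw [← h]; ring
      exact ⟨⟨h', a * v - b * u, by ring⟩, h', a * v + b * u, by ring⟩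
  have hf := reps_finite (p * m)
  have key := Set.ncard_union_add_ncard_inter {q ∈ reps (p * m) | (p : ℤ) ∣ a * q.2 - b * q.1}
    {q ∈ reps (p * m) | (p : ℤ) ∣ a * q.2 - (-b) * q.1} (hf.subset fun _ h => h.1)
    (hf.subset fun _ h => h.1)
  rw [← hU, hI, ncard_smul_reps hp0, hA, hB] at key
  omega

/-- The divisors of `pm` are those of `m` and `p` times those of `m`; the common ones are the `p * d`
that divide `m`. -/
lemma sum_divisors_prime_mul {p : ℕ} (hp : p.Prime) {m : ℕ} (hm : m ≠ 0) (f : ℕ → ℤ) :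
    ∑ d ∈ (p * m).divisors, f d + ∑ d ∈ {d ∈ m.divisors | p * d ∣ m}, f (p * d) =
      ∑ d ∈ m.divisors, f d + ∑ d ∈ m.divisors, f (p * d) := by
  have hinj : ∀ S : Set ℕ, Set.InjOn (fun d => p * d) S :=
    fun S => (mul_right_injective₀ hp.ne_zero).injOn
  have hU : (p * m).divisors = m.divisors ∪ m.divisors.image (fun d => p * d) := by
    ext d
    simp only [Nat.mem_divisors, Finset.mem_union, Finset.mem_image]
    constructor
    · rintro ⟨h, -⟩
      by_cases hd : p ∣ d
      · obtain ⟨e, rfl⟩ := hd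
        exact Or.inr ⟨e, ⟨Nat.dvd_of_mul_dvd_mul_left hp.pos h, hm⟩, rfl⟩
      · exact Or.inl ⟨((Nat.Prime.coprime_iff_not_dvd hp).mpr hd).symm.dvd_of_dvd_mul_left h, hm⟩
    · rintro (⟨h, -⟩ | ⟨e, ⟨h, -⟩, rfl⟩)
      · exact ⟨h.mul_left p, mul_ne_zero hp.ne_zero hm⟩
      · exact ⟨mul_dvd_mul_left p h, mul_ne_zero hp.ne_zero hm⟩
  have hI : m.divisors ∩ m.divisors.image (fun d => p * d) =
      {d ∈ m.divisors | p * d ∣ m}.image (fun d => p * d) := by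
    ext d
    simp only [Nat.mem_divisors, Finset.mem_inter, Finset.mem_image, Finset.mem_filter]
    constructor
    · rintro ⟨⟨h, -⟩, e, he, rfl⟩
      exact ⟨e, ⟨he, h⟩, rfl⟩
    · rintro ⟨e, ⟨he, h⟩, rfl⟩
      exact ⟨⟨h, hm⟩, e, he, rfl⟩
  have key := Finset.sum_union_inter (s₁ := m.divisors)
    (s₂ := m.divisors.image (fun d => p * d)) (f := f)
  rw [← hU, hI, Finset.sum_image (hinj _), Finset.sum_image (hinj _)] at key
  exact key

/-- The number of representations of `n ≥ 1` by `x² + 2y²` is `2 ∑_{d ∣ n} χ₋₈(d)`. -/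
theorem ncard_reps (n : ℕ) (hn : n ≠ 0) :
    ((reps n).ncard : ℤ) = 2 * ∑ d ∈ n.divisors, ZMod.χ₈' (d : ZMod 8) := by
  induction n using Nat.strong_induction_on with
  | _ n ih =>
  rcases eq_or_ne n 1 with rfl | hn1
  · have := ncard_reps_one
    simp [this]
  obtain ⟨p, hp, m, rfl⟩ := Nat.exists_prime_and_dvd hn1
  have hm : m ≠ 0 := by rintro rfl; simp at hn
  have hlt : ∀ k, k ≠ 0 → k < p * k := fun k hk =>
    lt_mul_of_one_lt_left (Nat.pos_of_ne_zero hk) hp.one_lt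
  have hsum := sum_divisors_prime_mul hp hm (fun d => ZMod.χ₈' (d : ZMod 8))
  simp only [Nat.cast_mul, map_mul, ← Finset.mul_sum] at hsum
  have ihm := ih m (hlt m hm) hm
  have hquot : ({q : ℤ × ℤ | (p : ℤ) * (q.1 ^ 2 + 2 * q.2 ^ 2) = m}.ncard : ℤ) =
      2 * ∑ d ∈ {d ∈ m.divisors | p * d ∣ m}, ZMod.χ₈' (d : ZMod 8) := by
    by_cases hpm : p ∣ m
    · obtain ⟨l, rfl⟩ := hpm
      have hl : l ≠ 0 := by rintro rfl; simp at hm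
      have h1 : {q : ℤ × ℤ | (p : ℤ) * (q.1 ^ 2 + 2 * q.2 ^ 2) = (p * l : ℕ)} = reps l := by
        ext q
        have hp0 : (p : ℤ) ≠ 0 := by exact_mod_cast hp.ne_zero
        simp only [reps, Set.mem_ofPred_eq, Nat.cast_mul, mul_right_inj' hp0]
      have h2 : {d ∈ (p * l).divisors | p * d ∣ p * l} = l.divisors := by
        ext d
        simp only [Finset.mem_filter, Nat.mem_divisors, Nat.mul_dvd_mul_iff_left hp.pos]
        exact ⟨fun h => ⟨h.2, hl⟩, fun h => ⟨⟨h.1.mul_left p, hm⟩, h.1⟩⟩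
      rw [h1, h2]
      exact ih l ((hlt l hl).trans (hlt _ hm)) hl
    · have h1 : {q : ℤ × ℤ | (p : ℤ) * (q.1 ^ 2 + 2 * q.2 ^ 2) = m} = ∅ := by
        ext q
        simp only [Set.mem_ofPred_eq, Set.mem_empty_iff_false, iff_false]
        exact fun h => hpm (Int.natCast_dvd_natCast.mp ⟨_, h.symm⟩)
      have h2 : {d ∈ m.divisors | p * d ∣ m} = ∅ := by
        rw [Finset.filter_eq_empty_iff]
        exact fun d _ h => hpm ((dvd_mul_right p d).trans h)
      rw [h1, h2]; simp
  have hχ := ZMod.χ₈'_nat_eq_if_mod_eight p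
  push_cast
  rcases eq_or_ne p 2 with rfl | h2
  · have := ncard_reps_two_mul m
    simp only [Nat.mod_self, if_true] at hχ
    rw [hχ] at hsum
    push_cast
    rw [this, ihm]
    linarith
  have hodd : ¬ p % 2 = 0 := by
    have := hp.eq_two_or_odd
    omega
  by_cases h8 : p % 8 = 1 ∨ p % 8 = 3
  · have := ncard_reps_split hp h8 m
    rw [if_neg hodd, if_pos h8] at hχ
    rw [hχ] at hsum
    zify at this
    linarith
  · have := ncard_reps_inert hp h2 h8 m
    rw [if_neg hodd, if_neg h8] at hχ
    rw [hχ] at hsum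
    rw [this, hquot]
    linarith

/-! ### The characters and their Dirichlet series -/

lemma chiNeg3_mul (a b : ℕ) : chiNeg3 (a * b) = chiNeg3 a * chiNeg3 b := by
  have h : a * b % 3 = (a % 3) * (b % 3) % 3 := Nat.mul_mod a b 3
  have ha : a % 3 = 0 ∨ a % 3 = 1 ∨ a % 3 = 2 := by omega
  have hb : b % 3 = 0 ∨ b % 3 = 1 ∨ b % 3 = 2 := by omega
  unfold chiNeg3
  rw [h]
  rcases ha with ha | ha | ha <;> rcases hb with hb | hb | hb <;> simp [ha, hb]

lemma chi24_eq (n : ℕ) : chi24 n = chiNeg3 n * (ZMod.χ₈' (n : ZMod 8) : ℝ) := by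
  rw [ZMod.χ₈'_nat_eq_if_mod_eight]
  have h2 : n % 2 = n % 24 % 2 := by omega
  have h3 : n % 3 = n % 24 % 3 := by omega
  have h8 : n % 8 = n % 24 % 8 := by omega
  have hlt : n % 24 < 24 := Nat.mod_lt _ (by norm_num)
  unfold chi24 chiNeg3
  rw [h2, h3, h8]
  generalize n % 24 = r at hlt
  interval_cases r <;> norm_num

lemma abs_chiNeg3_le (n : ℕ) : |chiNeg3 n| ≤ 1 := by
  unfold chiNeg3
  split_ifs <;> norm_num

lemma abs_chi24_le (n : ℕ) : |chi24 n| ≤ 1 := by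
  unfold chi24
  split_ifs <;> norm_num

lemma summable_div_rpow {f : ℕ → ℝ} (hf : ∀ n, |f n| ≤ 1) {s : ℝ} (hs : 1 < s) :
    Summable fun n : ℕ => f n / (n : ℝ) ^ s := by
  refine Summable.of_norm_bounded (Real.summable_one_div_nat_rpow.mpr hs) fun n => ?_
  have h0 : (0 : ℝ) ≤ (n : ℝ) ^ s := by positivity
  rw [norm_div, Real.norm_eq_abs, Real.norm_of_nonneg h0]
  gcongr
  exact hf n

/-- The coefficients of the two Dirichlet series to be compared agree. -/
lemma chiNeg3_mul_ncard_reps (n : ℕ) :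
    chiNeg3 n * (reps n).ncard =
      2 * ∑ d ∈ n.divisorsAntidiagonal, chiNeg3 d.1 * chi24 d.2 := by
  rcases eq_or_ne n 0 with rfl | hn
  · simp [chiNeg3]
  have h : ((reps n).ncard : ℝ) = 2 * ∑ d ∈ n.divisors, (ZMod.χ₈' (d : ZMod 8) : ℝ) := by
    exact_mod_cast congrArg (Int.cast : ℤ → ℝ) (ncard_reps n hn)
  rw [h, ← Nat.sum_divisorsAntidiagonal' (fun _ d => (ZMod.χ₈' (d : ZMod 8) : ℝ)),
    mul_left_comm, Finset.mul_sum]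
  congr 1
  refine Finset.sum_congr rfl fun d hd => ?_
  rw [chi24_eq, ← mul_assoc, ← chiNeg3_mul, (Nat.mem_divisorsAntidiagonal.mp hd).1]

lemma hasSum_L_mul_L {s : ℝ} (hs : 1 < s) :
    HasSum (fun n : ℕ => (∑ d ∈ n.divisorsAntidiagonal, chiNeg3 d.1 * chi24 d.2) / (n : ℝ) ^ s)
      ((∑' n : ℕ, chiNeg3 n / (n : ℝ) ^ s) * (∑' n : ℕ, chi24 n / (n : ℝ) ^ s)) := by
  have hf := summable_div_rpow abs_chiNeg3_le hs
  have hg := summable_div_rpow abs_chi24_le hs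
  have hfg := summable_mul_of_summable_norm hf.norm hg.norm
  have key := (hf.hasSum.mul hg.hasSum hfg).tsum_fiberwise (fun p : ℕ × ℕ => p.1 * p.2)
  refine key.congr_fun fun n => ?_
  rcases eq_or_ne n 0 with rfl | hn
  -- The fibre over `0` is infinite, but both characters vanish at `0`.
  · have h0 : ∀ p : (fun p : ℕ × ℕ => p.1 * p.2) ⁻¹' {0},
        chiNeg3 p.1.1 / (p.1.1 : ℝ) ^ s * (chi24 p.1.2 / (p.1.2 : ℝ) ^ s) = 0 := by
      rintro ⟨⟨a, b⟩, hp⟩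
      have hp : a * b = 0 := hp
      rcases Nat.mul_eq_zero.mp hp with rfl | rfl <;> simp [chiNeg3, chi24]
    rw [tsum_congr h0]
    simp
  rw [show (fun p : ℕ × ℕ => p.1 * p.2) ⁻¹' {n} = n.divisorsAntidiagonal by ext; simp [hn],
    Finset.tsum_subtype' n.divisorsAntidiagonal
      fun p => chiNeg3 p.1 / (p.1 : ℝ) ^ s * (chi24 p.2 / (p.2 : ℝ) ^ s), Finset.sum_div]
  refine Finset.sum_congr rfl fun d hd => ?_
  rw [← (Nat.mem_divisorsAntidiagonal.mp hd).1, Nat.cast_mul,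
    Real.mul_rpow (Nat.cast_nonneg _) (Nat.cast_nonneg _), div_mul_div_comm]

/-! ### The lattice sum -/

/-- Comparison with the sup norm on `ℤ²`, whose power `-2s` is summable because `2s > 2`. The term at
the origin is `1 / 0 ^ s = 0`. -/
lemma summable_form {s : ℝ} (hs : 1 < s) :
    Summable fun q : ℤ × ℤ => 1 / ((q.1 : ℝ) ^ 2 + 2 * (q.2 : ℝ) ^ 2) ^ s := by
  have h := (finTwoArrowEquiv ℤ).symm.summable_iff.mpr
    (EisensteinSeries.summable_one_div_norm_rpow (k := 2 * s) (by linarith))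
  refine h.of_nonneg_of_le (fun q => by positivity) fun q => ?_
  simp only [Function.comp_apply]
  set v : Fin 2 → ℤ := (finTwoArrowEquiv ℤ).symm q with hv
  have h0 : v 0 = q.1 := rfl
  have h1 : v 1 = q.2 := rfl
  rcases eq_or_ne v 0 with h | h
  · rw [← h0, ← h1, h]
    simp [Real.zero_rpow (by linarith : s ≠ 0)]
    positivity
  have hpos : 0 < ‖v‖ := norm_pos_iff.mpr h
  rw [Real.rpow_neg hpos.le, ← one_div, Real.rpow_mul hpos.le, Real.rpow_two]
  have hle : ‖v‖ ^ 2 ≤ (q.1 : ℝ) ^ 2 + 2 * (q.2 : ℝ) ^ 2 := by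
    rw [EisensteinSeries.norm_eq_max_natAbs, h0, h1, Nat.cast_max, Nat.cast_natAbs,
      Nat.cast_natAbs, Int.cast_abs, Int.cast_abs]
    rcases max_choice |(q.1 : ℝ)| |(q.2 : ℝ)| with h | h <;> rw [h, sq_abs] <;>
      nlinarith [sq_nonneg (q.1 : ℝ), sq_nonneg (q.2 : ℝ)]
  gcongr

lemma chiNeg3_form (x y : ℤ) :
    chiNeg3 (x ^ 2 + 2 * y ^ 2).toNat =
      (if (3 : ℤ) ∣ y then 1 else 0) - (if (3 : ℤ) ∣ x then 1 else 0) := by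
  have hN : (0 : ℤ) ≤ x ^ 2 + 2 * y ^ 2 := by positivity
  obtain ⟨n, hn⟩ := Int.eq_ofNat_of_zero_le hN
  rw [hn, Int.toNat_natCast]
  have hmod : (n : ℤ) % 3 = ((x % 3) ^ 2 + 2 * (y % 3) ^ 2) % 3 := by
    rw [← hn]
    simp [Int.add_emod, Int.mul_emod, pow_two]
  simp only [Int.dvd_iff_emod_eq_zero]
  have hx : x % 3 = 0 ∨ x % 3 = 1 ∨ x % 3 = 2 := by omega
  have hy : y % 3 = 0 ∨ y % 3 = 1 ∨ y % 3 = 2 := by omega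
  unfold chiNeg3
  rcases hx with hx | hx | hx <;> rcases hy with hy | hy | hy <;> rw [hx, hy] at hmod <;>
    norm_num at hmod <;> rw [hx, hy]
  · rw [if_neg (by omega), if_neg (by omega)]; norm_num
  · rw [if_neg (by omega), if_pos (by omega)]; norm_num
  · rw [if_neg (by omega), if_pos (by omega)]; norm_num
  · rw [if_pos (by omega)]; norm_num
  · rw [if_neg (by omega), if_neg (by omega)]; norm_num
  · rw [if_neg (by omega), if_neg (by omega)]; norm_num
  · rw [if_pos (by omega)]; norm_num
  · rw [if_neg (by omega), if_neg (by omega)]; norm_num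
  · rw [if_neg (by omega), if_neg (by omega)]; norm_num

/-- Collecting the terms of the lattice sum according to the value of the form. -/
lemma tsum_chiNeg3_form {s : ℝ} (hs : 1 < s) :
    ∑' q : ℤ × ℤ, chiNeg3 (q.1 ^ 2 + 2 * q.2 ^ 2).toNat *
        (1 / ((q.1 : ℝ) ^ 2 + 2 * (q.2 : ℝ) ^ 2) ^ s) =
      ∑' n : ℕ, chiNeg3 n * (reps n).ncard / (n : ℝ) ^ s := by
  have hsum : Summable fun q : ℤ × ℤ => chiNeg3 (q.1 ^ 2 + 2 * q.2 ^ 2).toNat *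
        (1 / ((q.1 : ℝ) ^ 2 + 2 * (q.2 : ℝ) ^ 2) ^ s) := by
    refine Summable.of_norm_bounded (summable_form hs) fun q => ?_
    have h0 : (0 : ℝ) ≤ 1 / ((q.1 : ℝ) ^ 2 + 2 * (q.2 : ℝ) ^ 2) ^ s := by positivity
    rw [norm_mul, Real.norm_eq_abs, Real.norm_of_nonneg h0]
    exact mul_le_of_le_one_left h0 (abs_chiNeg3_le _)
  have key := hsum.hasSum.tsum_fiberwise (fun q : ℤ × ℤ => (q.1 ^ 2 + 2 * q.2 ^ 2).toNat)
  rw [← key.tsum_eq]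
  refine tsum_congr fun n => ?_
  have hfib : (fun q : ℤ × ℤ => (q.1 ^ 2 + 2 * q.2 ^ 2).toNat) ⁻¹' {n} = reps n := by
    ext ⟨x, y⟩
    have hN : (0 : ℤ) ≤ x ^ 2 + 2 * y ^ 2 := by positivity
    simp only [Set.mem_preimage, Set.mem_singleton_iff, reps, Set.mem_ofPred_eq]
    omega
  rw [hfib]
  have hc : ∀ q : reps n, chiNeg3 (q.1.1 ^ 2 + 2 * q.1.2 ^ 2).toNat *
        (1 / ((q.1.1 : ℝ) ^ 2 + 2 * (q.1.2 : ℝ) ^ 2) ^ s) = chiNeg3 n * (1 / (n : ℝ) ^ s) := by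
    rintro ⟨⟨x, y⟩, h⟩
    have h : x ^ 2 + 2 * y ^ 2 = n := h
    have h' : (x : ℝ) ^ 2 + 2 * (y : ℝ) ^ 2 = n := by exact_mod_cast h
    simp only
    rw [h, h', Int.toNat_natCast]
  rw [tsum_congr hc, tsum_const, Nat.card_coe_set_eq, nsmul_eq_mul]
  ring

theorem sum_diff_eq_twice_L_chiNeg3_mul_L_chi24 (s : ℝ) (hs : 1 < s) :
    (∑' p : {q : ℤ × ℤ // q ≠ 0},
        (-(1 / ((9 * (p.1.2 : ℝ) ^ 2 + 2 * (p.1.1 : ℝ) ^ 2) ^ s))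
          + 1 / (((p.1.1 : ℝ) ^ 2 + 18 * (p.1.2 : ℝ) ^ 2) ^ s))) =
      2 * (∑' n : ℕ, chiNeg3 n / (n : ℝ) ^ s) * (∑' n : ℕ, chi24 n / (n : ℝ) ^ s) := by
  have hw := summable_form hs
  set w : ℤ × ℤ → ℝ := fun q => 1 / ((q.1 : ℝ) ^ 2 + 2 * (q.2 : ℝ) ^ 2) ^ s with hwdef
  have hw0 : ∀ q, 0 ≤ w q := fun q => by simp only [hwdef]; positivity
  have hi : Function.Injective fun q : ℤ × ℤ => ((3 * q.2, q.1) : ℤ × ℤ) := by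
    rintro ⟨u, v⟩ ⟨u', v'⟩ h
    simp only [Prod.mk.injEq] at h ⊢
    omega
  have hj : Function.Injective fun q : ℤ × ℤ => ((q.1, 3 * q.2) : ℤ × ℤ) := by
    rintro ⟨u, v⟩ ⟨u', v'⟩ h
    simp only [Prod.mk.injEq] at h ⊢
    omega
  have hX : ∑' q : ℤ × ℤ, w (3 * q.2, q.1) = ∑' q, (if (3 : ℤ) ∣ q.1 then 1 else 0) * w q := by
    rw [← hi.tsum_eq (f := fun q => (if (3 : ℤ) ∣ q.1 then 1 else 0) * w q)]
    · simp
    · rintro ⟨x, y⟩ h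
      have hx : (3 : ℤ) ∣ x := by
        by_contra hx
        simp [hx] at h
      obtain ⟨z, rfl⟩ := hx
      exact ⟨(y, z), rfl⟩
  have hY : ∑' q : ℤ × ℤ, w (q.1, 3 * q.2) = ∑' q, (if (3 : ℤ) ∣ q.2 then 1 else 0) * w q := by
    rw [← hj.tsum_eq (f := fun q => (if (3 : ℤ) ∣ q.2 then 1 else 0) * w q)]
    · simp
    · rintro ⟨x, y⟩ h
      have hy : (3 : ℤ) ∣ y := by
        by_contra hy
        simp [hy] at h
      obtain ⟨z, rfl⟩ := hy
      exact ⟨(x, z), rfl⟩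
  have hSX : Summable fun q : ℤ × ℤ => (if (3 : ℤ) ∣ q.1 then 1 else 0) * w q :=
    hw.of_nonneg_of_le (fun q => mul_nonneg (by split_ifs <;> norm_num) (hw0 q))
      fun q => mul_le_of_le_one_left (hw0 q) (by split_ifs <;> norm_num)
  have hSY : Summable fun q : ℤ × ℤ => (if (3 : ℤ) ∣ q.2 then 1 else 0) * w q :=
    hw.of_nonneg_of_le (fun q => mul_nonneg (by split_ifs <;> norm_num) (hw0 q))
      fun q => mul_le_of_le_one_left (hw0 q) (by split_ifs <;> norm_num)
  calc _ = ∑' p : {q : ℤ × ℤ // q ≠ 0}, (w (p.1.1, 3 * p.1.2) - w (3 * p.1.2, p.1.1)) := by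
        refine tsum_congr fun p => ?_
        simp only [hwdef]
        push_cast
        ring_nf
    -- The origin contributes `w 0 - w 0 = 0`.
    _ = ∑' q : ℤ × ℤ, (w (q.1, 3 * q.2) - w (3 * q.2, q.1)) := by
        refine Subtype.val_injective.tsum_eq
          (f := fun q : ℤ × ℤ => w (q.1, 3 * q.2) - w (3 * q.2, q.1)) fun q hq => ?_
        refine ⟨⟨q, ?_⟩, rfl⟩
        rintro rfl
        simp at hq
    _ = ∑' q : ℤ × ℤ, chiNeg3 (q.1 ^ 2 + 2 * q.2 ^ 2).toNat * w q := by
        have hsub := (hw.comp_injective hj).tsum_sub (hw.comp_injective hi)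
        simp only [Function.comp_apply] at hsub
        rw [hsub, hX, hY, ← hSY.tsum_sub hSX]
        refine tsum_congr fun q => ?_
        rw [chiNeg3_form, sub_mul]
    _ = ∑' n : ℕ, chiNeg3 n * (reps n).ncard / (n : ℝ) ^ s := tsum_chiNeg3_form hs
    _ = _ := by
        rw [mul_assoc, ← (hasSum_L_mul_L hs).tsum_eq, ← tsum_mul_left]
        refine tsum_congr fun n => ?_
        rw [chiNeg3_mul_ncard_reps, mul_div_assoc]
end

section
/- For every real s > 1, ∑_{n≥1} r_n / n^s = ζ(s)·L(χ_{-8}, s), where r_n = (1/2)·#{(k,m) ∈ ℤ² : k² + 2m² = n}; equivalently, (1/2)·∑'_{(k,m)} 1/(k² + 2m²)^s = ζ(s)·L(χ_{-8}, s). -/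
/-- The real Dirichlet character modulo 8 attached to `ℚ(√-2)`. -/
noncomputable def chiNeg8 (n : ℕ) : ℝ :=
  if n % 8 = 1 ∨ n % 8 = 3 then 1
  else if n % 8 = 5 ∨ n % 8 = 7 then -1
  else 0

/-! ### The form `x² + 2y²` and its representations -/

/-- The integral points on the ellipse `x² + 2y² = n`, i.e. the elements of norm `n` of
`ℤ[√-2]`, with `x + y√-2` encoded as `(x, y)`. -/
def repSet (n : ℤ) : Set (ℤ × ℤ) := {q | q.1 ^ 2 + 2 * q.2 ^ 2 = n}

lemma rCount_eq_ncard (n : ℕ) : rCount n = (1 / 2 : ℝ) * (repSet n).ncard := rfl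

lemma repSet_finite (n : ℤ) : (repSet n).Finite := by
  refine ((Set.finite_Icc (-n) n).prod (Set.finite_Icc (-n) n)).subset ?_
  rintro ⟨x, y⟩ h
  simp only [repSet, Set.mem_ofPred_eq] at h
  simp only [Set.mem_prod, Set.mem_Icc]
  refine ⟨⟨?_, ?_⟩, ?_, ?_⟩ <;> nlinarith [sq_nonneg x, sq_nonneg y, sq_nonneg (x + 1),
    sq_nonneg (x - 1), sq_nonneg (y + 1), sq_nonneg (y - 1), Int.le_self_sq x, Int.le_self_sq y,
    Int.le_self_sq (-x), Int.le_self_sq (-y)]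

lemma rCount_one : rCount 1 = 1 := by
  have h : repSet ((1 : ℕ) : ℤ) = {(1, 0), (-1, 0)} := by
    ext ⟨x, y⟩
    simp only [repSet, Set.mem_ofPred_eq, Set.mem_insert_iff, Set.mem_singleton_iff, Prod.mk.injEq]
    constructor
    · intro h
      push_cast at h
      have hy : y = 0 := by
        by_contra hy
        have : 0 < y ^ 2 := by positivity
        nlinarith [sq_nonneg x]
      subst hy
      have hx : x ^ 2 = 1 := by linarith
      rcases sq_eq_one_iff.mp hx with h | h <;> simp [h]
    · rintro (⟨rfl, rfl⟩ | ⟨rfl, rfl⟩) <;> norm_num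
  rw [rCount_eq_ncard, h, Set.ncard_pair (by decide)]
  norm_num

/-- Half the number of points of norm `p * n` that are divisible by `p`: multiplication by `p`
matches them with the points of norm `n / p`, and there are none when `p ∤ n`. -/
lemma ncard_smul_image {p n : ℕ} (hp : 0 < p) :
    (1 / 2 : ℝ) * ((fun q : ℤ × ℤ ↦ ((p : ℤ) * q.1, (p : ℤ) * q.2)) ''
      {q | (p : ℤ) * (q.1 ^ 2 + 2 * q.2 ^ 2) = n}).ncard =
      if p ∣ n then rCount (n / p) else 0 := by
  have hp' : (p : ℤ) ≠ 0 := by positivity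
  rw [Set.ncard_image_of_injective]
  · split_ifs with h
    · obtain ⟨m, rfl⟩ := h
      rw [Nat.mul_div_cancel_left _ hp, rCount_eq_ncard]
      congr 3
      ext q
      simp [repSet, hp.ne']
    · have : {q : ℤ × ℤ | (p : ℤ) * (q.1 ^ 2 + 2 * q.2 ^ 2) = n} = ∅ := by
        ext q
        simp only [Set.mem_ofPred_eq, Set.mem_empty_iff_false, iff_false]
        exact fun hq ↦ h (Int.natCast_dvd_natCast.mp ⟨_, hq.symm⟩)
      simp [this]
  · rintro ⟨x, y⟩ ⟨x', y'⟩ h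
    simpa [hp.ne'] using h

/-! ### Behaviour of primes in `ℤ[√-2]` -/

/-- Thue's pigeonhole argument: a prime `p ≡ 1, 3 mod 8`, modulo which `-2` is a square, is a norm
from `ℤ[√-2]`. -/
lemma exists_sq_add_two_sq {p : ℕ} (hp : p.Prime) (h2 : p ≠ 2)
    (h8 : p % 8 = 1 ∨ p % 8 = 3) : ∃ a b : ℤ, a ^ 2 + 2 * b ^ 2 = p := by
  have : Fact p.Prime := ⟨hp⟩
  obtain ⟨c, hc⟩ := (ZMod.exists_sq_eq_neg_two_iff h2).mpr h8
  set k := Nat.sqrt p with hk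
  have hk1 : p < (k + 1) * (k + 1) := Nat.lt_succ_sqrt p
  have hk2 : k * k < p := by
    refine lt_of_le_of_ne (Nat.sqrt_le p) fun h ↦ ?_
    have hk' : k ≠ 1 := fun h1 ↦ hp.one_lt.ne (by rw [← h, h1])
    exact Nat.not_prime_mul hk' hk' (h ▸ hp)
  obtain ⟨u, hu, v, hv, huv, hf⟩ := Finset.exists_ne_map_eq_of_card_lt_of_maps_to
    (s := Finset.range (k + 1) ×ˢ Finset.range (k + 1)) (t := (Finset.univ : Finset (ZMod p)))
    (f := fun q ↦ (q.1 : ZMod p) + c * q.2) (by simpa [ZMod.card] using hk1)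
    (fun _ _ ↦ Finset.mem_coe.mpr (Finset.mem_univ _))
  obtain ⟨i, j⟩ := u
  obtain ⟨i', j'⟩ := v
  simp only [Finset.mem_product, Finset.mem_range] at hu hv hf
  obtain ⟨x, hx⟩ : ∃ x : ℤ, x = (i : ℤ) - i' := ⟨_, rfl⟩
  obtain ⟨y, hy⟩ : ∃ y : ℤ, y = (j : ℤ) - j' := ⟨_, rfl⟩
  have hdvd : (p : ℤ) ∣ x ^ 2 + 2 * y ^ 2 := by
    rw [← ZMod.intCast_zmod_eq_zero_iff_dvd, hx, hy]
    push_cast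
    linear_combination ((i : ZMod p) - i' - c * (j - j')) * hf - (j - j' : ZMod p) ^ 2 * hc
  have hx2 : x ^ 2 ≤ k ^ 2 := sq_le_sq' (by omega) (by omega)
  have hy2 : y ^ 2 ≤ k ^ 2 := sq_le_sq' (by omega) (by omega)
  have hpos : 0 < x ^ 2 + 2 * y ^ 2 := by
    rcases eq_or_ne x 0 with h | h
    · have : y ≠ 0 := by
        rintro h'
        exact huv (by ext <;> simp <;> omega)
      positivity
    · positivity
  have hkz : (k : ℤ) ^ 2 < p := by rw [pow_two]; exact_mod_cast hk2
  obtain ⟨t, ht⟩ := hdvd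
  have hpz : (0 : ℤ) < p := by exact_mod_cast hp.pos
  have ht0 : 0 < t := by
    by_contra h
    nlinarith
  have ht3 : t < 3 := by
    by_contra h
    nlinarith
  obtain rfl | rfl : t = 1 ∨ t = 2 := by omega
  · exact ⟨x, y, by linarith⟩
  · have hev : (2 : ℤ) ∣ x := Int.prime_two.dvd_of_dvd_pow (n := 2) ⟨p - y ^ 2, by linarith⟩
    obtain ⟨w, rfl⟩ := hev
    exact ⟨y, w, by linarith⟩

lemma rCount_two_mul (n : ℕ) : rCount (2 * n) = rCount n := by
  -- Multiplication by the prime `√-2` above `2`.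
  have h : repSet ((2 * n : ℕ) : ℤ) = (fun q : ℤ × ℤ ↦ (2 * q.2, q.1)) '' repSet n := by
    ext ⟨x, y⟩
    simp only [repSet, Set.mem_ofPred_eq, Set.mem_image, Prod.mk.injEq, Prod.exists]
    push_cast
    constructor
    · intro h
      obtain ⟨w, rfl⟩ : (2 : ℤ) ∣ x :=
        Int.prime_two.dvd_of_dvd_pow (n := 2) ⟨n - y ^ 2, by linarith⟩
      exact ⟨w, by linarith, rfl, rfl⟩
    · rintro ⟨b, h, rfl, -⟩
      linarith
  rw [rCount_eq_ncard, rCount_eq_ncard, h, Set.ncard_image_of_injective]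
  rintro ⟨x, y⟩ ⟨x', y'⟩ h
  simp only [Prod.mk.injEq] at h ⊢
  omega

lemma rCount_inert_mul {p : ℕ} (hp : p.Prime) (h2 : p ≠ 2)
    (h8 : ¬ (p % 8 = 1 ∨ p % 8 = 3)) (n : ℕ) :
    rCount (p * n) = if p ∣ n then rCount (n / p) else 0 := by
  have : Fact p.Prime := ⟨hp⟩
  have hpi : Prime (p : ℤ) := Nat.prime_iff_prime_int.mp hp
  rw [← ncard_smul_image hp.pos, rCount_eq_ncard]
  congr 3
  ext ⟨x, y⟩
  simp only [repSet, Set.mem_ofPred_eq, Set.mem_image, Prod.mk.injEq, Prod.exists]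
  push_cast
  constructor
  · intro h
    have hz : (x : ZMod p) ^ 2 + 2 * (y : ZMod p) ^ 2 = 0 := by
      have := congrArg (Int.cast : ℤ → ZMod p) h
      push_cast at this
      simpa using this
    have hy : (p : ℤ) ∣ y := by
      rw [← ZMod.intCast_zmod_eq_zero_iff_dvd]
      by_contra hy
      refine h8 ((ZMod.exists_sq_eq_neg_two_iff h2).mp ⟨x / y, ?_⟩)
      field_simp
      linear_combination -hz
    have hx : (p : ℤ) ∣ x := by
      rw [← ZMod.intCast_zmod_eq_zero_iff_dvd] at hy ⊢
      rw [hy] at hz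
      simpa using hz
    obtain ⟨a, rfl⟩ := hx
    obtain ⟨b, rfl⟩ := hy
    exact ⟨a, b, mul_left_cancel₀ hpi.ne_zero (by linarith), rfl, rfl⟩
  · rintro ⟨a, b, h, rfl, rfl⟩
    linear_combination (p : ℤ) * h

/-- For a split prime `p = ππ̄`, an element of norm `p * n` is a multiple of `π` or of `π̄`, and it
is a multiple of both exactly when it is a multiple of `p`. -/
lemma rCount_split_mul {p : ℕ} (hp : p.Prime) (h2 : p ≠ 2)
    (h8 : p % 8 = 1 ∨ p % 8 = 3) (n : ℕ) :
    rCount (p * n) = 2 * rCount n - if p ∣ n then rCount (n / p) else 0 := by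
  have hpi : Prime (p : ℤ) := Nat.prime_iff_prime_int.mp hp
  have hp0 : (p : ℤ) ≠ 0 := hpi.ne_zero
  obtain ⟨a, b, hab⟩ := exists_sq_add_two_sq hp h2 h8
  have hp2 : ¬ (p : ℤ) ∣ 2 := by
    intro h
    exact h2 ((Nat.prime_dvd_prime_iff_eq hp Nat.prime_two).mp (by exact_mod_cast h))
  have hpa : ¬ (p : ℤ) ∣ a := by
    rintro ⟨t, rfl⟩
    have hb : (p : ℤ) ∣ b := by
      have : (p : ℤ) ∣ 2 * b ^ 2 := ⟨1 - p * t ^ 2, by linear_combination hab⟩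
      exact hpi.dvd_of_dvd_pow ((hpi.dvd_or_dvd this).resolve_left hp2)
    obtain ⟨w, rfl⟩ := hb
    exact hpi.not_isUnit (isUnit_of_dvd_one ⟨t ^ 2 + 2 * w ^ 2, mul_left_cancel₀ hp0
      (by linear_combination -hab)⟩)
  have h2a : ∀ z : ℤ, (p : ℤ) ∣ 2 * a * z → (p : ℤ) ∣ z := fun z hz ↦
    (hpi.dvd_or_dvd hz).resolve_left fun h ↦ (hpi.dvd_or_dvd h).elim hp2 hpa
  -- Multiplication by `π = a + b√-2` and by its conjugate.
  let f : ℤ × ℤ → ℤ × ℤ := fun q ↦ (a * q.1 - 2 * b * q.2, a * q.2 + b * q.1)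
  let g : ℤ × ℤ → ℤ × ℤ := fun q ↦ (a * q.1 + 2 * b * q.2, a * q.2 - b * q.1)
  have hf : Function.Injective f := by
    rintro ⟨x, y⟩ ⟨x', y'⟩ h
    simp only [f, Prod.mk.injEq] at h ⊢
    exact ⟨mul_left_cancel₀ hp0 (by linear_combination a * h.1 + 2 * b * h.2 - (x - x') * hab),
      mul_left_cancel₀ hp0 (by linear_combination a * h.2 - b * h.1 - (y - y') * hab)⟩
  have hg : Function.Injective g := by
    rintro ⟨x, y⟩ ⟨x', y'⟩ h
    simp only [g, Prod.mk.injEq] at h ⊢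
    exact ⟨mul_left_cancel₀ hp0 (by linear_combination a * h.1 - 2 * b * h.2 - (x - x') * hab),
      mul_left_cancel₀ hp0 (by linear_combination a * h.2 + b * h.1 - (y - y') * hab)⟩
  have hU : repSet ((p * n : ℕ) : ℤ) = f '' repSet n ∪ g '' repSet n := by
    ext ⟨x, y⟩
    simp only [repSet, Set.mem_union, Set.mem_ofPred_eq, Set.mem_image, Prod.mk.injEq,
      Prod.exists, f, g]
    push_cast
    constructor
    · intro h
      have hd : (p : ℤ) ∣ (a * y - b * x) * (a * y + b * x) :=
        ⟨y ^ 2 - b ^ 2 * n, by linear_combination y ^ 2 * hab - b ^ 2 * h⟩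
      rcases hpi.dvd_or_dvd hd with ⟨w, hw⟩ | ⟨w, hw⟩
      · left
        obtain ⟨v, hv⟩ : (p : ℤ) ∣ a * x + 2 * b * y := by
          refine hpi.dvd_of_dvd_pow (n := 2) ⟨p * n - 2 * p * w ^ 2, ?_⟩
          linear_combination p * h + (x ^ 2 + 2 * y ^ 2) * hab
            - 2 * (a * y - b * x + p * w) * hw
        have hx : a * v - 2 * b * w = x :=
          mul_left_cancel₀ hp0 (by linear_combination -a * hv + 2 * b * hw + x * hab)
        have hy : a * w + b * v = y :=
          mul_left_cancel₀ hp0 (by linear_combination -a * hw - b * hv + y * hab)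
        refine ⟨v, w, mul_left_cancel₀ hp0 ?_, hx, hy⟩
        rw [← h, ← hx, ← hy, ← hab]
        ring
      · right
        obtain ⟨v, hv⟩ : (p : ℤ) ∣ a * x - 2 * b * y := by
          refine hpi.dvd_of_dvd_pow (n := 2) ⟨p * n - 2 * p * w ^ 2, ?_⟩
          linear_combination p * h + (x ^ 2 + 2 * y ^ 2) * hab
            - 2 * (a * y + b * x + p * w) * hw
        have hx : a * v + 2 * b * w = x :=
          mul_left_cancel₀ hp0 (by linear_combination -a * hv - 2 * b * hw + x * hab)
        have hy : a * w - b * v = y :=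
          mul_left_cancel₀ hp0 (by linear_combination -a * hw + b * hv + y * hab)
        refine ⟨v, w, mul_left_cancel₀ hp0 ?_, hx, hy⟩
        rw [← h, ← hx, ← hy, ← hab]
        ring
    · rintro (⟨v, w, h, rfl, rfl⟩ | ⟨v, w, h, rfl, rfl⟩) <;>
      · rw [← h, ← hab]
        ring
  have hI : f '' repSet n ∩ g '' repSet n =
      (fun q : ℤ × ℤ ↦ ((p : ℤ) * q.1, (p : ℤ) * q.2)) ''
        {q | (p : ℤ) * (q.1 ^ 2 + 2 * q.2 ^ 2) = n} := by
    ext ⟨x, y⟩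
    simp only [repSet, Set.mem_inter_iff, Set.mem_ofPred_eq, Set.mem_image, Prod.mk.injEq,
      Prod.exists, f, g]
    constructor
    · rintro ⟨⟨v, w, h, h1, h2⟩, v', w', -, h1', h2'⟩
      obtain ⟨s, rfl⟩ : (p : ℤ) ∣ x := h2a x ⟨v + v', by
        linear_combination (v + v') * hab - a * h1 - 2 * b * h2 - a * h1' + 2 * b * h2'⟩
      obtain ⟨t, rfl⟩ : (p : ℤ) ∣ y := h2a y ⟨w + w', by
        linear_combination (w + w') * hab - a * h2 + b * h1 - a * h2' - b * h1'⟩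
      refine ⟨s, t, mul_left_cancel₀ hp0 ?_, rfl, rfl⟩
      rw [← h, ← hab]
      rw [← hab] at h1 h2
      linear_combination -(a * v - 2 * b * w + (a ^ 2 + 2 * b ^ 2) * s) * h1
        - 2 * (a * w + b * v + (a ^ 2 + 2 * b ^ 2) * t) * h2
    · rintro ⟨s, t, h, rfl, rfl⟩
      refine ⟨⟨a * s + 2 * b * t, a * t - b * s, ?_, ?_, ?_⟩,
        a * s - 2 * b * t, a * t + b * s, ?_, ?_, ?_⟩
      all_goals first
        | (rw [← h, ← hab]; ring)
        | (rw [← hab]; ring)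
  have hc := Set.ncard_union_add_ncard_inter (f '' repSet n) (g '' repSet n)
    ((repSet_finite n).image f) ((repSet_finite n).image g)
  rw [Set.ncard_image_of_injective _ hf, Set.ncard_image_of_injective _ hg, ← hU, hI] at hc
  rw [← ncard_smul_image hp.pos, rCount_eq_ncard, rCount_eq_ncard]
  have hc' := congrArg (Nat.cast : ℕ → ℝ) hc
  push_cast at hc' ⊢
  linarith

/-! ### Divisor sums of the character -/

lemma chiNeg8_mul (a b : ℕ) : chiNeg8 (a * b) = chiNeg8 a * chiNeg8 b := by
  have ha : a % 8 < 8 := Nat.mod_lt _ (by norm_num)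
  have hb : b % 8 < 8 := Nat.mod_lt _ (by norm_num)
  unfold chiNeg8
  rw [Nat.mul_mod]
  generalize a % 8 = i at *
  generalize b % 8 = j at *
  interval_cases i <;> interval_cases j <;> norm_num

lemma abs_chiNeg8_le (n : ℕ) : |chiNeg8 n| ≤ 1 := by
  unfold chiNeg8
  split_ifs <;> norm_num

/-- The divisors of `p * n` are the divisors of `n` together with their `p`-fold multiples; the
overlap is `p` times the divisors of `n / p`, and empty when `p ∤ n`. -/
lemma sum_chiNeg8_prime_mul {p n : ℕ} (hp : p.Prime) (hn : n ≠ 0) :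
    ∑ d ∈ (p * n).divisors, chiNeg8 d =
      (1 + chiNeg8 p) * ∑ d ∈ n.divisors, chiNeg8 d -
        chiNeg8 p * if p ∣ n then ∑ d ∈ (n / p).divisors, chiNeg8 d else 0 := by
  have hinj : Function.Injective (fun d ↦ p * d) := fun _ _ h ↦ Nat.eq_of_mul_eq_mul_left hp.pos h
  have hU : (p * n).divisors = n.divisors ∪ n.divisors.image (fun d ↦ p * d) := by
    ext d
    simp only [Nat.mem_divisors, Finset.mem_union, Finset.mem_image]
    constructor
    · rintro ⟨hd, -⟩
      by_cases hpd : p ∣ d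
      · obtain ⟨e, rfl⟩ := hpd
        exact Or.inr ⟨e, ⟨Nat.dvd_of_mul_dvd_mul_left hp.pos hd, hn⟩, rfl⟩
      · exact Or.inl ⟨((Nat.Prime.coprime_iff_not_dvd hp).mpr hpd).symm.dvd_of_dvd_mul_left hd, hn⟩
    · rintro (⟨hd, -⟩ | ⟨e, ⟨he, -⟩, rfl⟩)
      · exact ⟨hd.mul_left p, mul_ne_zero hp.ne_zero hn⟩
      · exact ⟨mul_dvd_mul_left p he, mul_ne_zero hp.ne_zero hn⟩
  have hI : ∑ d ∈ n.divisors ∩ n.divisors.image (fun d ↦ p * d), chiNeg8 d =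
      chiNeg8 p * if p ∣ n then ∑ d ∈ (n / p).divisors, chiNeg8 d else 0 := by
    split_ifs with h
    · obtain ⟨m, rfl⟩ := h
      have : (p * m).divisors ∩ (p * m).divisors.image (fun d ↦ p * d) =
          m.divisors.image (fun d ↦ p * d) := by
        ext d
        simp only [Nat.mem_divisors, Finset.mem_inter, Finset.mem_image]
        constructor
        · rintro ⟨⟨hd, -⟩, e, -, rfl⟩
          exact ⟨e, ⟨Nat.dvd_of_mul_dvd_mul_left hp.pos hd, right_ne_zero_of_mul hn⟩, rfl⟩
        · rintro ⟨e, ⟨he, -⟩, rfl⟩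
          exact ⟨⟨mul_dvd_mul_left p he, hn⟩, e, ⟨he.mul_left p, hn⟩, rfl⟩
      rw [this, Finset.sum_image (fun _ _ _ _ h ↦ hinj h), Nat.mul_div_cancel_left _ hp.pos,
        Finset.mul_sum]
      simp only [chiNeg8_mul]
    · rw [mul_zero]
      refine Finset.sum_eq_zero fun d hd ↦ ?_
      simp only [Nat.mem_divisors, Finset.mem_inter, Finset.mem_image] at hd
      obtain ⟨⟨hd, -⟩, e, -, rfl⟩ := hd
      exact absurd (dvd_of_mul_right_dvd hd) h
  have hS := Finset.sum_union_inter (s₁ := n.divisors) (s₂ := n.divisors.image (fun d ↦ p * d))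
    (f := chiNeg8)
  rw [← hU, hI, Finset.sum_image (fun _ _ _ _ h ↦ hinj h)] at hS
  simp only [chiNeg8_mul, ← Finset.mul_sum] at hS
  linarith

/-- The Hecke relation at `p` for the representation numbers, uniform in the splitting type. -/
lemma rCount_prime_mul {p : ℕ} (hp : p.Prime) (n : ℕ) :
    rCount (p * n) =
      (1 + chiNeg8 p) * rCount n - chiNeg8 p * if p ∣ n then rCount (n / p) else 0 := by
  rcases eq_or_ne p 2 with rfl | h2
  · rw [rCount_two_mul, show chiNeg8 2 = 0 by norm_num [chiNeg8]]
    ring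
  by_cases h8 : p % 8 = 1 ∨ p % 8 = 3
  · rw [rCount_split_mul hp h2 h8, show chiNeg8 p = 1 by simp [chiNeg8, h8]]
    ring
  · have h8' : p % 8 = 5 ∨ p % 8 = 7 := by
      have := hp.eq_two_or_odd
      omega
    rw [rCount_inert_mul hp h2 h8, show chiNeg8 p = -1 by simp [chiNeg8, h8, h8']]
    ring

lemma rCount_eq_sum_chiNeg8 (n : ℕ) (hn : n ≠ 0) :
    rCount n = ∑ d ∈ n.divisors, chiNeg8 d := by
  induction n using Nat.strong_induction_on with
  | _ n ih =>
    rcases eq_or_ne n 1 with rfl | h1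
    · rw [rCount_one]
      simp [chiNeg8]
    · have hp := Nat.minFac_prime h1
      obtain ⟨m, hm⟩ := Nat.minFac_dvd n
      generalize n.minFac = p at hp hm
      subst hm
      have hm0 : m ≠ 0 := right_ne_zero_of_mul hn
      have hlt : m < p * m := lt_mul_of_one_lt_left (Nat.pos_of_ne_zero hm0) hp.one_lt
      rw [rCount_prime_mul hp, sum_chiNeg8_prime_mul hp hm0, ih m hlt hm0]
      split_ifs with h
      · rw [ih (m / p) ((Nat.div_le_self _ _).trans_lt hlt)
          (Nat.div_pos (Nat.le_of_dvd (Nat.pos_of_ne_zero hm0) h) hp.pos).ne']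
      · rfl

/-! ### The Dirichlet series -/

lemma summable_one_div_pnat_rpow {s : ℝ} (hs : 1 < s) :
    Summable fun n : ℕ+ ↦ 1 / ((n : ℕ) : ℝ) ^ s :=
  (Real.summable_one_div_nat_rpow.mpr hs).comp_injective PNat.coe_injective

lemma summable_chiNeg8 {s : ℝ} (hs : 1 < s) :
    Summable fun n : ℕ+ ↦ ‖chiNeg8 n / ((n : ℕ) : ℝ) ^ s‖ := by
  refine (summable_one_div_pnat_rpow hs).of_nonneg_of_le (fun _ ↦ norm_nonneg _) fun n ↦ ?_
  have h : 0 < ((n : ℕ) : ℝ) ^ s := Real.rpow_pos_of_pos (by exact_mod_cast n.pos) s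
  rw [norm_div, Real.norm_of_nonneg h.le, Real.norm_eq_abs]
  gcongr
  exact abs_chiNeg8_le _

/-- Dirichlet convolution of the two absolutely convergent series for `ζ(s)` and `L(χ₋₈, s)`. -/
lemma hasSum_rCount {s : ℝ} (hs : 1 < s) :
    HasSum (fun n : ℕ+ ↦ rCount n / ((n : ℕ) : ℝ) ^ s)
      ((∑' n : ℕ+, 1 / ((n : ℕ) : ℝ) ^ s) * ∑' n : ℕ+, chiNeg8 n / ((n : ℕ) : ℝ) ^ s) := by
  have hF := (summable_one_div_pnat_rpow hs).norm
  have hG := summable_chiNeg8 hs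
  rw [tsum_mul_tsum_of_summable_norm hF hG]
  have hsum := (summable_mul_of_summable_norm hF hG).hasSum
  rw [← sigmaAntidiagonalEquivProd.hasSum_iff] at hsum
  refine hsum.sigma (f := _) fun n ↦ ?_
  have hterm : rCount n / ((n : ℕ) : ℝ) ^ s =
      ∑ q : (n : ℕ).divisorsAntidiagonal, chiNeg8 q.1.2 / ((n : ℕ) : ℝ) ^ s := by
    rw [Finset.sum_coe_sort (n : ℕ).divisorsAntidiagonal
      (fun q ↦ chiNeg8 q.2 / ((n : ℕ) : ℝ) ^ s), ← Finset.sum_div,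
      Nat.sum_divisorsAntidiagonal (fun _ j ↦ chiNeg8 j), Nat.sum_div_divisors,
      rCount_eq_sum_chiNeg8 n n.ne_zero]
  rw [hterm]
  convert hasSum_fintype _ using 1
  refine Finset.sum_congr rfl fun q _ ↦ ?_
  have hq := (Nat.mem_divisorsAntidiagonal.mp q.2).1
  simp only [Function.comp, sigmaAntidiagonalEquivProd, Equiv.coe_fn_mk,
    divisorsAntidiagonalFactors, PNat.mk_coe]
  have hn : ((n : ℕ) : ℝ) = q.1.1 * q.1.2 := by exact_mod_cast hq.symm
  rw [hn, Real.mul_rpow (Nat.cast_nonneg _) (Nat.cast_nonneg _)]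
  ring

lemma norm_pos_of_ne_zero {q : ℤ × ℤ} (hq : q ≠ 0) : 0 < q.1 ^ 2 + 2 * q.2 ^ 2 := by
  rcases eq_or_ne q.1 0 with h | h
  · have : q.2 ≠ 0 := fun h' ↦ hq (Prod.ext h h')
    positivity
  · positivity

/-- The value of `x² + 2y²` at a nonzero lattice point, as a positive integer. -/
def formVal (p : {q : ℤ × ℤ // q ≠ 0}) : ℕ+ :=
  ⟨(p.1.1 ^ 2 + 2 * p.1.2 ^ 2).toNat, by have := norm_pos_of_ne_zero p.2; omega⟩

lemma formVal_eq_iff (p : {q : ℤ × ℤ // q ≠ 0}) (n : ℕ+) :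
    formVal p = n ↔ p.1.1 ^ 2 + 2 * p.1.2 ^ 2 = ((n : ℕ) : ℤ) := by
  have := norm_pos_of_ne_zero p.2
  rw [← PNat.coe_inj]
  simp only [formVal, PNat.mk_coe]
  omega

/-- The fibre of `formVal` over `n` is the set of representations of `n`. -/
def fiberEquiv (n : ℕ+) :
    {p : {q : ℤ × ℤ // q ≠ 0} // formVal p = n} ≃ repSet (n : ℕ) where
  toFun p := ⟨p.1.1, (formVal_eq_iff _ _).mp p.2⟩
  invFun q := ⟨⟨q.1, by
    rintro h
    have h1 : q.1.1 ^ 2 + 2 * q.1.2 ^ 2 = ((n : ℕ) : ℤ) := q.2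
    have := n.pos
    simp [h] at h1
    omega⟩, (formVal_eq_iff _ _).mpr q.2⟩
  left_inv _ := rfl
  right_inv _ := rfl

/-- Grouping the lattice points by the value of the form turns the double sum into the Dirichlet
series of `rCount`; since all terms are nonnegative, convergence of the latter suffices. -/
lemma tsum_lattice {s : ℝ} (hs : 1 < s) :
    (1 / 2 : ℝ) * (∑' p : {q : ℤ × ℤ // q ≠ 0},
        1 / (((p.1.1 : ℝ) ^ 2 + 2 * (p.1.2 : ℝ) ^ 2) ^ s)) =
      ∑' n : ℕ+, rCount n / ((n : ℕ) : ℝ) ^ s := by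
  let e := Equiv.sigmaFiberEquiv formVal
  have hval : ∀ (n : ℕ+) (p : {p : {q : ℤ × ℤ // q ≠ 0} // formVal p = n}),
      1 / ((((e ⟨n, p⟩).1.1 : ℝ) ^ 2 + 2 * ((e ⟨n, p⟩).1.2 : ℝ) ^ 2) ^ s) =
        1 / ((n : ℕ) : ℝ) ^ s := by
    intro n p
    have h := congrArg (Int.cast : ℤ → ℝ) ((formVal_eq_iff _ _).mp p.2)
    push_cast at h
    change 1 / (((p.1.1.1 : ℝ) ^ 2 + 2 * (p.1.1.2 : ℝ) ^ 2) ^ s) = _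
    rw [h]
  have hfin : ∀ n : ℕ+, Finite {p : {q : ℤ × ℤ // q ≠ 0} // formVal p = n} := fun n ↦
    have := (repSet_finite (n : ℕ)).to_subtype
    Finite.of_equiv _ (fiberEquiv n).symm
  have hfib : ∀ n : ℕ+, ∑' p : {p : {q : ℤ × ℤ // q ≠ 0} // formVal p = n},
      1 / ((((e ⟨n, p⟩).1.1 : ℝ) ^ 2 + 2 * ((e ⟨n, p⟩).1.2 : ℝ) ^ 2) ^ s) =
        2 * (rCount n / ((n : ℕ) : ℝ) ^ s) := by
    intro n
    simp only [hval]
    rw [tsum_const, Nat.card_congr (fiberEquiv n), rCount_eq_ncard, nsmul_eq_mul,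
      Nat.card_coe_set_eq]
    ring
  have hsum : Summable fun x ↦
      1 / ((((e x).1.1 : ℝ) ^ 2 + 2 * ((e x).1.2 : ℝ) ^ 2) ^ s) := by
    rw [summable_sigma_of_nonneg (fun x ↦ by positivity)]
    refine ⟨fun n ↦ ?_, ?_⟩
    · have := hfin n
      exact Summable.of_finite
    · simp only [hfib]
      exact (hasSum_rCount hs).summable.mul_left 2
  rw [← e.tsum_eq, hsum.tsum_sigma]
  simp only [hfib]
  rw [tsum_mul_left]
  ring

theorem rCount_dirichlet_series_eq_zeta_mul_L (s : ℝ) (hs : 1 < s) :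
    (∑' n : ℕ, rCount (n + 1) / ((n : ℝ) + 1) ^ s) =
        (∑' n : ℕ, 1 / ((n : ℝ) + 1) ^ s) * (∑' n : ℕ, chiNeg8 (n + 1) / ((n : ℝ) + 1) ^ s) ∧
    (1 / 2 : ℝ) * (∑' p : {q : ℤ × ℤ // q ≠ 0},
        1 / (((p.1.1 : ℝ) ^ 2 + 2 * (p.1.2 : ℝ) ^ 2) ^ s)) =
      (∑' n : ℕ, 1 / ((n : ℝ) + 1) ^ s) * (∑' n : ℕ, chiNeg8 (n + 1) / ((n : ℝ) + 1) ^ s) := by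
  have h1 := tsum_pnat_eq_tsum_succ (f := fun n : ℕ ↦ rCount n / (n : ℝ) ^ s)
  have h2 := tsum_pnat_eq_tsum_succ (f := fun n : ℕ ↦ 1 / (n : ℝ) ^ s)
  have h3 := tsum_pnat_eq_tsum_succ (f := fun n : ℕ ↦ chiNeg8 n / (n : ℝ) ^ s)
  push_cast at h1 h2 h3
  rw [tsum_lattice hs, ← h1, ← h2, ← h3]
  exact ⟨(hasSum_rCount hs).tsum_eq, (hasSum_rCount hs).tsum_eq⟩
end

section
/- For every real s > 2, ∑'_{(k,m)} (k² − 18m²)/(k² + 18m²)^s + ∑'_{(k,m)} (9m² − 2k²)/(9m² + 2k²)^s = (1 + 2·3^{−s} + 27·3^{−2s}) · ∑'_{(k,m)} (m² − 2k²)/(m² + 2k²)^s. -/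
/-!
Write `F(x, y) = (x² - 2y²) / (x² + 2y²)^s = Re(z²) / N(z)^s` for `z = x + y√-2`, and let `S` be the
sum of `F` over the lattice `L = ℤ[√-2]`. The two sums on the left are the sums of `F` over the
sublattices `3 ∣ y` and `3 ∣ x`. Together with `3 ∣ x - y` and `3 ∣ x + y` these are the four
sublattices of index 3; they cover `L` and any two meet in `3L`, so the four sums add up to
`S + 3 · (sum over 3L)` (`indicator_identity`), and the sum over `3L` is `9 · 3^(-2s) · S`.
The last two sublattices are the prime ideals `(1 ± √-2) L` above 3. As `(1 ± √-2)² = -1 ± 2√-2`,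
the terms satisfy `F((1 + √-2)u) + F((1 - √-2)u) = -2 · 3^(-s) · F(u)` (`zagierF_conj_sum`), so
these two ideals contribute `-2 · 3^(-s) · S`. Solving for the two remaining sums gives the identity.
-/

/-- `Re(z²) / N(z)^s` for `z = x + y√-2`; its value at `(0, 0)` is `0`. -/
noncomputable def zagierF (s : ℝ) (p : ℤ × ℤ) : ℝ :=
  ((p.1 : ℝ) ^ 2 - 2 * (p.2 : ℝ) ^ 2) / ((p.1 : ℝ) ^ 2 + 2 * (p.2 : ℝ) ^ 2) ^ s

/-- Absolute convergence, by comparison of `N(z)^(1-s)` with a power of the sup norm. -/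
lemma summable_zagierF (s : ℝ) (hs : 2 < s) : Summable (zagierF s) := by
  have h := EisensteinSeries.summable_one_div_norm_rpow (k := 2 * (s - 1)) (by linarith)
  have h2 := (finTwoArrowEquiv ℤ).symm.summable_iff.mpr h
  refine Summable.of_norm_bounded h2 ?_
  rintro ⟨x, y⟩
  by_cases h0 : (x, y) = (0, 0)
  · obtain ⟨rfl, rfl⟩ := Prod.mk.inj h0
    simp only [zagierF, Int.cast_zero]
    norm_num
    positivity
  set v : Fin 2 → ℤ := (finTwoArrowEquiv ℤ).symm (x, y) with hv
  have hvn : v ≠ 0 := by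
    intro h
    apply h0
    have a := congrFun h 0
    have b := congrFun h 1
    simp [hv, finTwoArrowEquiv] at a b
    simp [a, b]
  have hpos : 0 < ‖v‖ := norm_pos_iff.mpr hvn
  set N : ℝ := (x : ℝ) ^ 2 + 2 * (y : ℝ) ^ 2 with hN
  have hle : ‖v‖ ^ 2 ≤ N := by
    have : ‖v‖ ≤ √N := by
      rw [pi_norm_le_iff_of_nonneg (Real.sqrt_nonneg _)]
      intro i
      apply Real.le_sqrt_of_sq_le
      fin_cases i <;> simp [hv, finTwoArrowEquiv, Int.norm_eq_abs, hN] <;>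
        nlinarith [sq_nonneg (x : ℝ), sq_nonneg (y : ℝ)]
    calc ‖v‖ ^ 2 ≤ √N ^ 2 := by gcongr
      _ = N := Real.sq_sqrt (by positivity)
  have hNpos : 0 < N := lt_of_lt_of_le (by positivity) hle
  have h1 : ‖zagierF s (x, y)‖ ≤ N / N ^ s := by
    simp only [zagierF]
    rw [norm_div, Real.norm_of_nonneg (Real.rpow_nonneg hNpos.le s), Real.norm_eq_abs]
    gcongr
    rw [abs_le]
    constructor <;> nlinarith [sq_nonneg (x : ℝ), sq_nonneg (y : ℝ)]
  refine h1.trans ?_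
  have h3 : N / N ^ s = N ^ (-(s - 1)) := by
    rw [neg_sub, Real.rpow_sub hNpos, Real.rpow_one]
  rw [h3]
  calc N ^ (-(s - 1)) ≤ (‖v‖ ^ 2) ^ (-(s - 1)) :=
        Real.rpow_le_rpow_of_nonpos (by positivity) hle (by linarith)
    _ = ‖v‖ ^ (-(2 * (s - 1))) := by
        rw [← Real.rpow_natCast, ← Real.rpow_mul hpos.le]
        congr 1
        push_cast
        ring
    _ = _ := rfl

/-- Summing over the nonzero pairs is the same as summing over all pairs when the term at `0`
vanishes. -/
lemma tsum_ne_zero_eq (f : ℤ × ℤ → ℝ) (h0 : f 0 = 0) :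
    ∑' p : {q : ℤ × ℤ // q ≠ 0}, f p.1 = ∑' p, f p := by
  refine tsum_subtype_eq_of_support_subset (f := f) (s := {q | q ≠ 0}) ?_
  intro p hp h
  exact hp (h ▸ h0)

/-- The sum of `f` over a sublattice, computed through an injective parametrization `g` of it. -/
lemma hasSum_indicator (f : ℤ × ℤ → ℝ) (hf : Summable f) (g : ℤ × ℤ → ℤ × ℤ)
    (hg : Function.Injective g) (A : Set (ℤ × ℤ)) (hA : A = Set.range g) :
    HasSum (A.indicator f) (∑' p, f (g p)) := by
  subst hA
  have h : HasSum (fun p => f (g p)) (∑' p, f (g p)) := (hf.comp_injective hg).hasSum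
  rw [← hg.hasSum_iff (f := (Set.range g).indicator f)] at *
  · convert h using 1
    ext p
    simp
  · intro x hx
    simp [hx]

open Classical in
/-- The sublattices `3 ∣ y`, `3 ∣ x`, `3 ∣ x - y`, `3 ∣ x + y` cover `ℤ²`, and any two of them meet
in `3ℤ²`, which lies in all four. -/
lemma indicator_identity (f : ℤ × ℤ → ℝ) (p : ℤ × ℤ) :
    {q : ℤ × ℤ | 3 ∣ q.2}.indicator f p + {q : ℤ × ℤ | 3 ∣ q.1}.indicator f p +
      {q : ℤ × ℤ | 3 ∣ q.1 - q.2}.indicator f p + {q : ℤ × ℤ | 3 ∣ q.1 + q.2}.indicator f p =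
    f p + 3 * {q : ℤ × ℤ | 3 ∣ q.1 ∧ 3 ∣ q.2}.indicator f p := by
  simp only [Set.indicator_apply, Set.mem_ofPred_eq]
  have hx : p.1 % 3 = 0 ∨ p.1 % 3 = 1 ∨ p.1 % 3 = 2 := by omega
  have hy : p.2 % 3 = 0 ∨ p.2 % 3 = 1 ∨ p.2 % 3 = 2 := by omega
  split_ifs <;> first
    | ring1
    | (exfalso; rcases hx with hx | hx | hx <;> rcases hy with hy | hy | hy <;> omega)

lemma zagierF_three_mul (s : ℝ) (p : ℤ × ℤ) :
    zagierF s (3 * p.1, 3 * p.2) = 9 * (3 : ℝ) ^ (-2 * s) * zagierF s p := by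
  simp only [zagierF]
  push_cast
  have h : (3 * (p.1 : ℝ)) ^ 2 + 2 * (3 * (p.2 : ℝ)) ^ 2 =
      3 ^ (2 : ℝ) * ((p.1 : ℝ) ^ 2 + 2 * (p.2 : ℝ) ^ 2) := by norm_num; ring
  rw [h, Real.mul_rpow (by positivity) (by positivity), ← Real.rpow_mul (by norm_num),
    neg_mul, Real.rpow_neg (by norm_num)]
  have : (3 : ℝ) ^ (2 * s) ≠ 0 := by positivity
  field_simp
  ring

/-- `(x - 2y, x + y)` and `(x + 2y, y - x)` are the coordinates of `(1 ± √-2)(x + y√-2)`; the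
`xy`-terms of the two numerators cancel. -/
lemma zagierF_conj_sum (s : ℝ) (p : ℤ × ℤ) :
    zagierF s (p.1 - 2 * p.2, p.1 + p.2) + zagierF s (p.1 + 2 * p.2, p.2 - p.1) =
      -2 * (3 : ℝ) ^ (-s) * zagierF s p := by
  simp only [zagierF]
  push_cast
  have h1 : ((p.1 : ℝ) - 2 * p.2) ^ 2 + 2 * ((p.1 : ℝ) + p.2) ^ 2 =
      3 * ((p.1 : ℝ) ^ 2 + 2 * (p.2 : ℝ) ^ 2) := by ring
  have h2 : ((p.1 : ℝ) + 2 * p.2) ^ 2 + 2 * ((p.2 : ℝ) - p.1) ^ 2 =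
      3 * ((p.1 : ℝ) ^ 2 + 2 * (p.2 : ℝ) ^ 2) := by ring
  rw [h1, h2, Real.mul_rpow (by positivity) (by positivity), Real.rpow_neg (by norm_num),
    ← add_div]
  have : (3 : ℝ) ^ s ≠ 0 := by positivity
  rw [← div_div, eq_comm, mul_div_assoc']
  congr 1
  field_simp
  ring

theorem zagier_sum_identity (s : ℝ) (hs : 2 < s) :
    (∑' p : {q : ℤ × ℤ // q ≠ 0},
        ((p.1.1 : ℝ) ^ 2 - 18 * (p.1.2 : ℝ) ^ 2) /
          ((p.1.1 : ℝ) ^ 2 + 18 * (p.1.2 : ℝ) ^ 2) ^ s) +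
      (∑' p : {q : ℤ × ℤ // q ≠ 0},
        (9 * (p.1.2 : ℝ) ^ 2 - 2 * (p.1.1 : ℝ) ^ 2) /
          (9 * (p.1.2 : ℝ) ^ 2 + 2 * (p.1.1 : ℝ) ^ 2) ^ s) =
      (1 + 2 * (3 : ℝ) ^ (-s) + 27 * (3 : ℝ) ^ (-2 * s)) *
        ∑' p : {q : ℤ × ℤ // q ≠ 0},
          ((p.1.2 : ℝ) ^ 2 - 2 * (p.1.1 : ℝ) ^ 2) /
            ((p.1.2 : ℝ) ^ 2 + 2 * (p.1.1 : ℝ) ^ 2) ^ s := by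
  have hF := summable_zagierF s hs
  have e1 := tsum_ne_zero_eq (fun q => ((q.1 : ℝ) ^ 2 - 18 * (q.2 : ℝ) ^ 2) /
          ((q.1 : ℝ) ^ 2 + 18 * (q.2 : ℝ) ^ 2) ^ s) (by simp)
  have e2 := tsum_ne_zero_eq (fun q => (9 * (q.2 : ℝ) ^ 2 - 2 * (q.1 : ℝ) ^ 2) /
          (9 * (q.2 : ℝ) ^ 2 + 2 * (q.1 : ℝ) ^ 2) ^ s) (by simp)
  have e3 := tsum_ne_zero_eq (fun q => ((q.2 : ℝ) ^ 2 - 2 * (q.1 : ℝ) ^ 2) /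
          ((q.2 : ℝ) ^ 2 + 2 * (q.1 : ℝ) ^ 2) ^ s) (by simp)
  rw [e1, e2, e3]
  have t1 : ∀ q : ℤ × ℤ, ((q.1 : ℝ) ^ 2 - 18 * (q.2 : ℝ) ^ 2) /
      ((q.1 : ℝ) ^ 2 + 18 * (q.2 : ℝ) ^ 2) ^ s = zagierF s (q.1, 3 * q.2) := by
    intro q
    simp only [zagierF]
    push_cast
    ring_nf
  have t2 : ∀ q : ℤ × ℤ, (9 * (q.2 : ℝ) ^ 2 - 2 * (q.1 : ℝ) ^ 2) /
      (9 * (q.2 : ℝ) ^ 2 + 2 * (q.1 : ℝ) ^ 2) ^ s = zagierF s (3 * q.2, q.1) := by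
    intro q
    simp only [zagierF]
    push_cast
    ring_nf
  have t3 : ∑' q : ℤ × ℤ, ((q.2 : ℝ) ^ 2 - 2 * (q.1 : ℝ) ^ 2) /
      ((q.2 : ℝ) ^ 2 + 2 * (q.1 : ℝ) ^ 2) ^ s = ∑' q, zagierF s q :=
    (Equiv.prodComm ℤ ℤ).tsum_eq (zagierF s)
  simp only [t1, t2, t3]
  have i3 : Function.Injective (fun q : ℤ × ℤ => (q.1 - 2 * q.2, q.1 + q.2)) := by
    rintro ⟨a, b⟩ ⟨c, d⟩ h
    simp only [Prod.mk.injEq] at h ⊢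
    omega
  have i4 : Function.Injective (fun q : ℤ × ℤ => (q.1 + 2 * q.2, q.2 - q.1)) := by
    rintro ⟨a, b⟩ ⟨c, d⟩ h
    simp only [Prod.mk.injEq] at h ⊢
    omega
  have s1 := hasSum_indicator _ hF (fun q => (q.1, 3 * q.2))
    (by rintro ⟨a, b⟩ ⟨c, d⟩ h; simp only [Prod.mk.injEq] at h ⊢; omega)
    {q : ℤ × ℤ | 3 ∣ q.2} (by
      ext ⟨x, y⟩
      simp only [Set.mem_ofPred_eq, Set.mem_range, Prod.exists, Prod.mk.injEq]
      exact ⟨fun h => ⟨x, y / 3, by omega, by omega⟩, fun ⟨a, b, h⟩ => by omega⟩)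
  have s2 := hasSum_indicator _ hF (fun q => (3 * q.2, q.1))
    (by rintro ⟨a, b⟩ ⟨c, d⟩ h; simp only [Prod.mk.injEq] at h ⊢; omega)
    {q : ℤ × ℤ | 3 ∣ q.1} (by
      ext ⟨x, y⟩
      simp only [Set.mem_ofPred_eq, Set.mem_range, Prod.exists, Prod.mk.injEq]
      exact ⟨fun h => ⟨y, x / 3, by omega, by omega⟩, fun ⟨a, b, h⟩ => by omega⟩)
  have s3 := hasSum_indicator _ hF (fun q => (q.1 - 2 * q.2, q.1 + q.2)) i3
    {q : ℤ × ℤ | 3 ∣ q.1 - q.2} (by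
      ext ⟨x, y⟩
      simp only [Set.mem_ofPred_eq, Set.mem_range, Prod.exists, Prod.mk.injEq]
      exact ⟨fun h => ⟨(x + 2 * y) / 3, (y - x) / 3, by omega, by omega⟩,
        fun ⟨a, b, h⟩ => by omega⟩)
  have s4 := hasSum_indicator _ hF (fun q => (q.1 + 2 * q.2, q.2 - q.1)) i4
    {q : ℤ × ℤ | 3 ∣ q.1 + q.2} (by
      ext ⟨x, y⟩
      simp only [Set.mem_ofPred_eq, Set.mem_range, Prod.exists, Prod.mk.injEq]
      exact ⟨fun h => ⟨(x - 2 * y) / 3, (x + y) / 3, by omega, by omega⟩,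
        fun ⟨a, b, h⟩ => by omega⟩)
  have s5 := hasSum_indicator _ hF (fun q => (3 * q.1, 3 * q.2))
    (by rintro ⟨a, b⟩ ⟨c, d⟩ h; simp only [Prod.mk.injEq] at h ⊢; omega)
    {q : ℤ × ℤ | 3 ∣ q.1 ∧ 3 ∣ q.2} (by
      ext ⟨x, y⟩
      simp only [Set.mem_ofPred_eq, Set.mem_range, Prod.exists, Prod.mk.injEq]
      exact ⟨fun h => ⟨x / 3, y / 3, by omega, by omega⟩, fun ⟨a, b, h⟩ => by omega⟩)
  have key := (((s1.add s2).add s3).add s4).unique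
    ((hF.hasSum.add (s5.mul_left 3)).congr_fun (indicator_identity (zagierF s)))
  have h34 : ∑' q : ℤ × ℤ, zagierF s (q.1 - 2 * q.2, q.1 + q.2) +
      ∑' q : ℤ × ℤ, zagierF s (q.1 + 2 * q.2, q.2 - q.1) =
      -2 * (3 : ℝ) ^ (-s) * ∑' q, zagierF s q := by
    rw [← tsum_mul_left]
    exact ((hF.comp_injective i3).tsum_add (hF.comp_injective i4)).symm.trans
      (tsum_congr (zagierF_conj_sum s))
  have h5 : ∑' q : ℤ × ℤ, zagierF s (3 * q.1, 3 * q.2) =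
      9 * (3 : ℝ) ^ (-2 * s) * ∑' q, zagierF s q := by
    rw [← tsum_mul_left]
    exact tsum_congr (zagierF_three_mul s)
  rw [h5] at key
  linarith
end

section
/- Let p ≥ 5 be a prime and q = p^r a power of p. Let F_q be the field with q elements, and for a ∈ {2, 3, 6} set ε_a = 1 if a is a square in F_q and ε_a = −1 otherwise. Then the number of triples (x,y,z) ∈ F_q³ with xyz ≠ 0 satisfying xyz(x+y+z) + (xy + xz + yz) − 10xyz = 0 is congruent to ε_3 + ε_2 + 6ε_6 modulo 8. -/
open scoped Classical

/-!
Dividing by `xyz`, the equation becomes `(x + 1/x) + (y + 1/y) + (z + 1/z) = 10`.  Let `c u` be the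
number of `x ≠ 0` with `x + 1/x = u`.  The discriminant of `x² - u x + 1` is `u² - 4`, so
`c = e + 2 g` with `e` the indicator of `{2, -2}` and `g` the indicator of the `u ≠ ±2` for which
`u² - 4` is a square (`fibreCount_eq`).  The number of points is `∑ c u * c v * c (10 - u - v)`
(`card_eq_triple`), and the symmetric trilinear expansion reduces it modulo `8` to
`T e e e + 6 T e e g + 12 T e g g`, where `T` is the triple convolution evaluated at `10`.

* `T e e e = 0`, because no sum of three signs `±2` equals `10` when `p ≥ 5`.
* `T e e g = g 6 + 2 g 10 + g 14`.
* `T e g g = ∑ v, g v * g (8 - v) + ∑ v, g v * g (12 - v)`, which is `g 4 + g 6` modulo `2`: the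
  involution exchanging the two factors fixes only `v = 4`, respectively `v = 6`
  (`conv_parity`).

The values `u² - 4` at `u = 4, 6, 10, 14` are `3, 2, 6, 3` times nonzero squares, which gives the
result.
-/

namespace PointCount

variable {F : Type} [Field F] [Fintype F]

/-- The number of nonzero `x` with `x + 1/x = u`. -/
noncomputable def fibreCount (u : F) : ℤ :=
  ∑ x : F, if x ≠ 0 ∧ x + x⁻¹ = u then 1 else 0

/-- The indicator function of `{2, -2}`, the ramification values of `x ↦ x + 1/x`. -/
noncomputable def ram (u : F) : ℤ := if u = 2 ∨ u = -2 then 1 else 0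

/-- The indicator function of the values with exactly two preimages under `x ↦ x + 1/x`. -/
noncomputable def spl (u : F) : ℤ :=
  if (u ≠ 2 ∧ u ≠ -2) ∧ IsSquare (u ^ 2 - 4) then 1 else 0

/-- The triple convolution of `f`, `g`, `h`, evaluated at `10`. -/
noncomputable def triple (f g h : F → ℤ) : ℤ :=
  ∑ u : F, ∑ v : F, f u * g v * h (10 - u - v)

lemma fibreCount_eq (h2 : (2 : F) ≠ 0) (u : F) : fibreCount u = ram u + 2 * spl u := by
  have key : ∀ x : F, (x ≠ 0 ∧ x + x⁻¹ = u) ↔ (2 * x - u) ^ 2 = u ^ 2 - 4 := by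
    intro x
    constructor
    · rintro ⟨hx, rfl⟩
      field_simp
      ring
    · intro h
      have h4 : (4 : F) ≠ 0 := by
        have := mul_ne_zero h2 h2
        norm_num at this
        exact this
      have hq : x ^ 2 - u * x + 1 = 0 := by
        apply mul_left_cancel₀ h4
        linear_combination h
      have hx : x ≠ 0 := by
        rintro rfl
        simp at hq
      refine ⟨hx, ?_⟩
      field_simp
      linear_combination hq
  have hc : fibreCount u =
      ((Finset.univ.filter fun x : F => (2 * x - u) ^ 2 = u ^ 2 - 4).card : ℤ) := by
    simp only [fibreCount, key, Finset.sum_boole]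
  rw [hc]
  by_cases hs : IsSquare (u ^ 2 - 4)
  · obtain ⟨s, hs'⟩ := hs
    have hset : (Finset.univ.filter fun x : F => (2 * x - u) ^ 2 = u ^ 2 - 4) =
        {(u + s) / 2, (u - s) / 2} := by
      ext x
      simp only [Finset.mem_filter, Finset.mem_univ, true_and, Finset.mem_insert,
        Finset.mem_singleton]
      rw [hs', ← pow_two, sq_eq_sq_iff_eq_or_eq_neg, eq_div_iff h2, eq_div_iff h2]
      constructor
      · rintro (h | h)
        · left; linear_combination h
        · right; linear_combination h
      · rintro (h | h)
        · left; linear_combination h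
        · right; linear_combination h
    rw [hset]
    by_cases hu : u = 2 ∨ u = -2
    · have hs0 : s = 0 := by
        have : s * s = 0 := by
          rw [← hs']
          rcases hu with rfl | rfl <;> ring
        simpa using this
      have hn : ¬ (u ≠ 2 ∧ u ≠ -2) := by tauto
      simp [ram, spl, hu, hn, hs0]
    · have hn : (u ≠ 2 ∧ u ≠ -2) := by tauto
      have hs0 : s ≠ 0 := by
        rintro rfl
        have : (u - 2) * (u + 2) = 0 := by linear_combination hs'
        rcases mul_eq_zero.mp this with h | h
        · exact hn.1 (by linear_combination h)
        · exact hn.2 (by linear_combination h)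
      have hne : (u + s) / 2 ≠ (u - s) / 2 := by
        intro h
        field_simp at h
        have : 2 * s = 0 := by linear_combination h
        exact (mul_ne_zero h2 hs0) this
      rw [Finset.card_pair hne]
      simp [ram, spl, hn, hs']
  · have hu : ¬ (u = 2 ∨ u = -2) := by
      rintro (rfl | rfl) <;> exact hs ⟨0, by ring⟩
    have hset : (Finset.univ.filter fun x : F => (2 * x - u) ^ 2 = u ^ 2 - 4) = ∅ := by
      ext x
      simp only [Finset.mem_filter, Finset.mem_univ, true_and, Finset.notMem_empty, iff_false]
      intro h
      exact hs ⟨2 * x - u, by rw [← h, pow_two]⟩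
    simp [hset, ram, spl, hu, hs]

lemma sum_fibreCount_mul (f : F → ℤ) :
    ∑ u, fibreCount u * f u = ∑ x : F, if x ≠ 0 then f (x + x⁻¹) else 0 := by
  simp only [fibreCount, Finset.sum_mul]
  rw [Finset.sum_comm]
  refine Finset.sum_congr rfl fun x _ => ?_
  by_cases hx : x = 0 <;> simp [hx]

lemma card_eq_triple :
    (Nat.card {v : F × F × F //
        v.1 * v.2.1 * v.2.2 ≠ 0 ∧
        v.1 * v.2.1 * v.2.2 * (v.1 + v.2.1 + v.2.2) +
          (v.1 * v.2.1 + v.1 * v.2.2 + v.2.1 * v.2.2) -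
          10 * (v.1 * v.2.1 * v.2.2) = 0} : ℤ) =
      triple (fibreCount (F := F)) fibreCount fibreCount := by
  have h1 : triple (fibreCount (F := F)) fibreCount fibreCount =
      ∑ u : F, fibreCount u * ∑ v : F, fibreCount v * fibreCount (10 - u - v) := by
    simp only [triple, Finset.mul_sum, mul_assoc]
  rw [h1, sum_fibreCount_mul]
  simp only [sum_fibreCount_mul]
  rw [Nat.card_eq_fintype_card, Fintype.card_subtype, Finset.card_filter]
  push_cast
  rw [Fintype.sum_prod_type]
  refine Finset.sum_congr rfl fun x _ => ?_
  rw [Fintype.sum_prod_type]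
  by_cases hx : x = 0
  · simp [hx]
  rw [if_pos hx]
  refine Finset.sum_congr rfl fun y _ => ?_
  by_cases hy : y = 0
  · simp [hy]
  rw [if_pos hy, fibreCount]
  refine Finset.sum_congr rfl fun z _ => ?_
  by_cases hz : z = 0
  · simp [hz]
  refine if_congr ?_ rfl rfl
  refine and_congr (by simp [hx, hy, hz]) ?_
  constructor
  · intro h
    field_simp
    linear_combination h
  · intro h
    field_simp at h
    linear_combination h

lemma triple_swap₁₂ (f g h : F → ℤ) : triple f g h = triple g f h := by
  unfold triple
  rw [Finset.sum_comm]
  refine Finset.sum_congr rfl fun u _ => Finset.sum_congr rfl fun v _ => ?_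
  rw [show (10 : F) - v - u = 10 - u - v by ring]
  ring

lemma triple_swap₂₃ (f g h : F → ℤ) : triple f g h = triple f h g := by
  unfold triple
  refine Finset.sum_congr rfl fun u _ => ?_
  rw [← Equiv.sum_comp (Equiv.subLeft (10 - u))]
  refine Finset.sum_congr rfl fun v _ => ?_
  simp only [Equiv.subLeft_apply, sub_sub_cancel]
  ring

lemma triple_expand (e g : F → ℤ) :
    triple (fun u => e u + 2 * g u) (fun u => e u + 2 * g u) (fun u => e u + 2 * g u) =
      triple e e e + 6 * triple e e g + 12 * triple e g g + 8 * triple g g g := by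
  have h : triple (fun u => e u + 2 * g u) (fun u => e u + 2 * g u) (fun u => e u + 2 * g u) =
      triple e e e + 2 * triple e e g + 2 * triple e g e + 2 * triple g e e + 4 * triple e g g
        + 4 * triple g e g + 4 * triple g g e + 8 * triple g g g := by
    simp only [triple, Finset.mul_sum, ← Finset.sum_add_distrib]
    refine Finset.sum_congr rfl fun u _ => Finset.sum_congr rfl fun v _ => ?_
    ring
  rw [h, triple_swap₁₂ g e e, triple_swap₂₃ e g e, triple_swap₁₂ g e g, triple_swap₂₃ g g e,
    triple_swap₁₂ g e g]
  ring

lemma sum_ram_mul (h2 : (2 : F) ≠ 0) (f : F → ℤ) : ∑ u, ram u * f u = f 2 + f (-2) := by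
  have hne : (2 : F) ≠ -2 := by
    intro h
    have : (2 : F) * 2 = 0 := by linear_combination h
    exact mul_ne_zero h2 h2 this
  have hr : ∀ u : F, ram u * f u = (if u = 2 then f u else 0) + (if u = -2 then f u else 0) := by
    intro u
    unfold ram
    by_cases h : u = 2
    · subst h
      simp [hne]
    · simp [h]
  simp only [hr, Finset.sum_add_distrib]
  simp

/-- The self-convolution of `spl` at `2 * m` has the parity of its diagonal term `spl m`, since
`v ↦ 2 * m - v` pairs off the other terms. -/
lemma conv_parity (h2 : (2 : F) ≠ 0) (m : F) :
    ∃ k : ℤ, ∑ v : F, spl v * spl (2 * m - v) = spl m + 2 * k := by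
  have hz : ∑ v ∈ Finset.univ.erase m, ((spl v * spl (2 * m - v) : ℤ) : ZMod 2) = 0 := by
    refine Finset.sum_involution (fun v _ => 2 * m - v) ?_ ?_ ?_ ?_
    · intro v _
      rw [sub_sub_cancel, mul_comm (spl (2 * m - v))]
      exact CharTwo.add_self_eq_zero _
    · intro v hv _ h
      refine (Finset.mem_erase.mp hv).1 (mul_left_cancel₀ h2 ?_)
      linear_combination -h
    · intro v hv
      refine Finset.mem_erase.mpr ⟨fun h => (Finset.mem_erase.mp hv).1 ?_, Finset.mem_univ _⟩
      linear_combination -h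
    · intro v _
      exact sub_sub_cancel _ _
  rw [← Int.cast_sum] at hz
  obtain ⟨k, hk⟩ := (ZMod.intCast_zmod_eq_zero_iff_dvd _ 2).mp hz
  refine ⟨k, ?_⟩
  rw [← Finset.add_sum_erase _ _ (Finset.mem_univ m), hk, show 2 * m - m = m by ring]
  have : spl m * spl m = spl m := by
    unfold spl
    split_ifs <;> simp
  rw [this]
  norm_num

/-- If `u² - 4 = a s²` with `a s ≠ 0`, then `spl u` records whether `a` is a square. -/
lemma two_mul_spl {u a s : F} (ha : a ≠ 0) (hs : s ≠ 0) (h : u ^ 2 - 4 = a * s ^ 2) :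
    2 * spl u = 1 + (if IsSquare a then 1 else -1) := by
  have hne : u ≠ 2 ∧ u ≠ -2 := by
    have h0 : u ^ 2 - 4 ≠ 0 := by
      rw [h]
      exact mul_ne_zero ha (pow_ne_zero 2 hs)
    constructor <;> rintro rfl <;> exact h0 (by ring)
  have hsq : IsSquare (u ^ 2 - 4) ↔ IsSquare a := by
    rw [h]
    constructor
    · rintro ⟨t, ht⟩
      refine ⟨t / s, ?_⟩
      field_simp
      linear_combination ht
    · rintro ⟨t, rfl⟩
      exact ⟨t * s, by ring⟩
  unfold spl
  by_cases hA : IsSquare a <;> simp [hsq, hA, hne]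

end PointCount

open PointCount in
theorem point_count_mod_eight (p : ℕ) (hp : p.Prime) (hp5 : 5 ≤ p)
    (F : Type) [Field F] [Fintype F] [CharP F p]
    (ε : F → ℤ) (hε : ∀ a : F, ε a = if IsSquare a then 1 else -1) :
    (Nat.card {v : F × F × F //
        v.1 * v.2.1 * v.2.2 ≠ 0 ∧
        v.1 * v.2.1 * v.2.2 * (v.1 + v.2.1 + v.2.2) +
          (v.1 * v.2.1 + v.1 * v.2.2 + v.2.1 * v.2.2) -
          10 * (v.1 * v.2.1 * v.2.2) = 0} : ℤ) ≡
      ε 3 + ε 2 + 6 * ε 6 [ZMOD 8] := by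
  have h2 : (2 : F) ≠ 0 := by
    intro h
    have : p ∣ 2 := (CharP.cast_eq_zero_iff F p 2).mp (by exact_mod_cast h)
    have := Nat.le_of_dvd (by norm_num) this
    omega
  have h3 : (3 : F) ≠ 0 := by
    intro h
    have : p ∣ 3 := (CharP.cast_eq_zero_iff F p 3).mp (by exact_mod_cast h)
    have := Nat.le_of_dvd (by norm_num) this
    omega
  have h4 : (4 : F) ≠ 0 := by
    rw [show (4 : F) = 2 * 2 by norm_num]
    exact mul_ne_zero h2 h2
  have h6 : (6 : F) ≠ 0 := by
    rw [show (6 : F) = 2 * 3 by norm_num]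
    exact mul_ne_zero h2 h3
  have h8 : (8 : F) ≠ 0 := by
    rw [show (8 : F) = 2 * 4 by norm_num]
    exact mul_ne_zero h2 h4
  have g4 : 2 * spl (4 : F) = 1 + ε 3 := by
    rw [hε]
    exact two_mul_spl h3 h2 (by norm_num)
  have g6 : 2 * spl (6 : F) = 1 + ε 2 := by
    rw [hε]
    exact two_mul_spl h2 h4 (by norm_num)
  have g10 : 2 * spl (10 : F) = 1 + ε 6 := by
    rw [hε]
    exact two_mul_spl h6 h4 (by norm_num)
  have g14 : 2 * spl (14 : F) = 1 + ε 3 := by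
    rw [hε]
    exact two_mul_spl h3 h8 (by norm_num)
  have hram : ∀ u : F, u - 2 ≠ 0 → u + 2 ≠ 0 → ram u = 0 := by
    intro u hm hq
    refine if_neg ?_
    rintro (rfl | rfl)
    · exact hm (by ring)
    · exact hq (by ring)
  have h12 : (12 : F) ≠ 0 := by
    rw [show (12 : F) = 2 * 6 by norm_num]
    exact mul_ne_zero h2 h6
  have h16 : (16 : F) ≠ 0 := by
    rw [show (16 : F) = 2 * 8 by norm_num]
    exact mul_ne_zero h2 h8
  have r6 : ram (6 : F) = 0 := hram _ (by norm_num [h4]) (by norm_num [h8])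
  have r10 : ram (10 : F) = 0 := hram _ (by norm_num [h8]) (by norm_num [h12])
  have r14 : ram (14 : F) = 0 := hram _ (by norm_num [h12]) (by norm_num [h16])
  have hee : ∀ f : F → ℤ, triple ram ram f = f 6 + 2 * f 10 + f 14 := by
    intro f
    simp only [triple, mul_assoc, ← Finset.mul_sum, sum_ram_mul h2]
    norm_num
    ring
  have heg : triple (ram (F := F)) spl spl =
      ∑ v : F, spl v * spl (2 * 4 - v) + ∑ v : F, spl v * spl (2 * 6 - v) := by
    simp only [triple, mul_assoc, ← Finset.mul_sum, sum_ram_mul h2]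
    norm_num
  obtain ⟨k, hk⟩ := conv_parity h2 (4 : F)
  obtain ⟨l, hl⟩ := conv_parity h2 (6 : F)
  have hc : (fibreCount (F := F)) = fun u => ram u + 2 * spl u := funext (fibreCount_eq h2)
  rw [card_eq_triple, hc, triple_expand, hee, hee, heg, hk, hl, r6, r10, r14]
  rw [Int.modEq_iff_dvd]
  generalize triple (spl (F := F)) spl spl = t
  omega
end
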